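/- arXiv:2503.12241 — 10 statements merged into one kernel-verified Lean document; each statement's English description precedes it below -/
import Mathlib

section
/- Let S = ⟨a_1, …, a_k⟩ be a numerical semigroup with minimal generators a_1 < ⋯ < a_k and set A = a_1 + ⋯ + a_k. Then for every x ∈ S, the minimum ∞-length l_∞(x) = min 𝓛_∞(x) satisfies x/A ≤ l_∞(x) ≤ x/A + a_k. -/
open Finset

/-- `Zfac a x`: the set of factorizations of `x` with respect to the generators `a`. -/
def Zfac {k : ℕ} (a : Fin k → ℕ) (x : ℕ) : Set (Fin k → ℕ) :=
  {z | ∑ j, z j * a j = x}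

/-- The `∞`-length of a factorization: the maximum coordinate. -/
def linf {k : ℕ} (z : Fin k → ℕ) : ℕ :=
  Finset.univ.sup z

/-- The `0`-length of a factorization: the size of its support. -/
def lzero {k : ℕ} (z : Fin k → ℕ) : ℕ :=
  (Finset.univ.filter fun i => z i ≠ 0).card

/-- `𝓛∞(x)`: the set of `∞`-lengths of factorizations of `x`. -/
def LinfSet {k : ℕ} (a : Fin k → ℕ) (x : ℕ) : Set ℕ :=
  linf '' Zfac a x

/-- `𝓛∞(x, i)`: `∞`-lengths of factorizations whose maximum coordinate is attained at `i`. -/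
def LinfSetI {k : ℕ} (a : Fin k → ℕ) (x : ℕ) (i : Fin k) : Set ℕ :=
  linf '' {z | z ∈ Zfac a x ∧ z i = linf z}

/-- `𝓛₀(x)`: the set of `0`-lengths of factorizations of `x`. -/
def LzeroSet {k : ℕ} (a : Fin k → ℕ) (x : ℕ) : Set ℕ :=
  lzero '' Zfac a x

/-- The set of differences between consecutive elements of a set `T ⊆ ℕ`. -/
def deltaSet (T : Set ℕ) : Set ℕ :=
  {d | ∃ u ∈ T, ∃ v ∈ T, u < v ∧ v - u = d ∧ ∀ t ∈ T, ¬(u < t ∧ t < v)}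

/-- `Δ∞(x)`. -/
def DeltaInf {k : ℕ} (a : Fin k → ℕ) (x : ℕ) : Set ℕ := deltaSet (LinfSet a x)

/-- `Δ∞(S) = ⋃ x ∈ S, Δ∞(x)` (for `x ∉ S` the contribution is empty). -/
def DeltaInfS {k : ℕ} (a : Fin k → ℕ) : Set ℕ := ⋃ x : ℕ, DeltaInf a x

/-- `Δ₀(x)`. -/
def DeltaZero {k : ℕ} (a : Fin k → ℕ) (x : ℕ) : Set ℕ := deltaSet (LzeroSet a x)

/-- `Δ₀(S) = ⋃ x ∈ S, Δ₀(x)` (for `x ∉ S` the contribution is empty). -/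
def DeltaZeroS {k : ℕ} (a : Fin k → ℕ) : Set ℕ := ⋃ x : ℕ, DeltaZero a x

/-- `a` is a system of minimal generators: no generator is a `ℕ`-combination of the others. -/
def MinimalGens {k : ℕ} (a : Fin k → ℕ) : Prop :=
  ∀ i : Fin k, ¬ ∃ z : Fin k → ℕ, z i = 0 ∧ ∑ j, z j * a j = a i

theorem aux_two {k : ℕ} (f g : Fin k → ℕ) (i j : Fin k) (hij : i ≠ j)
    (h : ∀ l, l ≠ i → l ≠ j → f l = g l) :
    ∑ l, f l + (g i + g j) = ∑ l, g l + (f i + f j) := by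
  have key : ∀ f : Fin k → ℕ, ∑ l, f l = f i + (f j + ∑ l ∈ (univ.erase i).erase j, f l) := by
    intro f
    rw [Finset.add_sum_erase _ f (by simp [hij.symm]), Finset.add_sum_erase _ f (by simp)]
  have e : ∑ l ∈ (univ.erase i).erase j, f l = ∑ l ∈ (univ.erase i).erase j, g l := by
    apply Finset.sum_congr rfl
    intro l hl
    simp only [Finset.mem_erase] at hl
    exact h l hl.2.1 hl.1
  rw [key f, key g, e]
  ring

theorem aux_bal {k : ℕ} (a : Fin k → ℕ) (M x : ℕ) (hM : ∀ i, a i ≤ M) (hpos : ∀ i, 0 < a i)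
    (hx : (Zfac a x).Nonempty) :
    ∃ z ∈ Zfac a x, ∀ i j, z i ≤ z j + M := by
  obtain ⟨z, hz, hmin⟩ :=
    (measure (fun z : Fin k → ℕ => ∑ l, z l ^ 2 * a l)).wf.has_min (Zfac a x) hx
  refine ⟨z, hz, fun i j => ?_⟩
  by_contra! hlt
  have hij : i ≠ j := by
    rintro rfl
    omega
  have hi := hM i
  have hj := hM j
  obtain ⟨d, hd⟩ : ∃ d, z i = d + a j := ⟨z i - a j, by omega⟩
  let w : Fin k → ℕ := fun l => if l = i then d else if l = j then z j + a i else z l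
  have wi : w i = d := by simp [w]
  have wj : w j = z j + a i := by simp [w, hij.symm]
  have wl : ∀ l, l ≠ i → l ≠ j → w l = z l := by
    intro l h1 h2
    simp [w, h1, h2]
  have s1 := aux_two (fun l => w l * a l) (fun l => z l * a l) i j hij
    (fun l h1 h2 => by simp only [wl l h1 h2])
  have s2 := aux_two (fun l => w l ^ 2 * a l) (fun l => z l ^ 2 * a l) i j hij
    (fun l h1 h2 => by simp only [wl l h1 h2])
  simp only [wi, wj, hd] at s1 s2
  have hw : w ∈ Zfac a x := by
    have hz' : ∑ l, z l * a l = x := hz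
    show ∑ l, w l * a l = x
    rw [← hz']
    nlinarith
  apply hmin w hw
  show ∑ l, w l ^ 2 * a l < ∑ l, z l ^ 2 * a l
  have h1 : 2 * z j + a i < 2 * d + a j := by omega
  have h2 : 0 < a i * a j := Nat.mul_pos (hpos i) (hpos j)
  have h3 := Nat.mul_lt_mul_of_pos_left h1 h2
  nlinarith

/-- For every `x ∈ S`, the minimum `∞`-length satisfies `x/A ≤ l_∞(x) ≤ x/A + a_k`. -/
theorem stmt_0 (k : ℕ) (hk : 1 ≤ k) (a : Fin k → ℕ)
    (hmono : StrictMono a)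
    (hgcd : Finset.univ.gcd a = 1)
    (hmin : MinimalGens a)
    (A : ℕ) (hA : A = ∑ i, a i)
    (x : ℕ) (hx : (Zfac a x).Nonempty) :
    (x : ℚ) / (A : ℚ) ≤ ((sInf (LinfSet a x) : ℕ) : ℚ) ∧
      ((sInf (LinfSet a x) : ℕ) : ℚ) ≤ (x : ℚ) / (A : ℚ) + (a ⟨k - 1, by omega⟩ : ℚ) := by
  have hpos : ∀ i, 0 < a i := by
    intro i
    rcases Nat.eq_zero_or_pos (a i) with h | h
    · exact absurd ⟨fun _ => 0, rfl, by simp [h]⟩ (hmin i)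
    · exact h
  have hM : ∀ i, a i ≤ a ⟨k - 1, by omega⟩ := by
    intro i
    apply hmono.monotone
    rw [Fin.le_def]
    have := i.isLt
    show i.val ≤ k - 1
    omega
  generalize a ⟨k - 1, by omega⟩ = M at hM ⊢
  have hApos : 0 < A := by
    rw [hA]
    exact Finset.sum_pos (fun i _ => hpos i) ⟨⟨0, hk⟩, Finset.mem_univ _⟩
  have hAq : (0 : ℚ) < A := by exact_mod_cast hApos
  constructor
  · obtain ⟨z, hz, hzl⟩ := Nat.sInf_mem (hx.image linf)
    change linf z = sInf (LinfSet a x) at hzl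
    rw [← hzl, div_le_iff₀ hAq]
    have hz' : ∑ l, z l * a l = x := hz
    have : x ≤ linf z * A := by
      rw [← hz', hA, Finset.mul_sum]
      exact Finset.sum_le_sum fun l _ =>
        Nat.mul_le_mul_right _ (Finset.le_sup (f := z) (Finset.mem_univ l))
    exact_mod_cast this
  · obtain ⟨z, hz, hb⟩ := aux_bal a M x hM hpos hx
    have hz' : ∑ l, z l * a l = x := hz
    have h1 : sInf (LinfSet a x) ≤ linf z := Nat.sInf_le ⟨z, hz, rfl⟩
    obtain ⟨i, -, hi⟩ := Finset.exists_mem_eq_sup Finset.univ ⟨⟨0, hk⟩, Finset.mem_univ _⟩ z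
    have h2 : linf z = z i := hi
    have h3 : z i * A ≤ x + M * A := by
      rw [← hz', hA, Finset.mul_sum, Finset.mul_sum, ← Finset.sum_add_distrib]
      refine Finset.sum_le_sum fun l _ => ?_
      rw [← add_mul]
      exact Nat.mul_le_mul_right _ (hb i l)
    have h4 : sInf (LinfSet a x) * A ≤ x + M * A :=
      le_trans (Nat.mul_le_mul_right _ (h1.trans h2.le)) h3
    have h5 : ((sInf (LinfSet a x) : ℕ) : ℚ) * A ≤ x + M * A := by exact_mod_cast h4
    have h6 : (x : ℚ) / A + M = (x + M * A) / A := by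
      field_simp
    rw [h6, le_div_iff₀ hAq]
    exact h5
end

section
/- Let S = ⟨a_1, …, a_k⟩ be a numerical semigroup with minimal generators a_1 < ⋯ < a_k. Fix i ∈ {1,…,k} and x ∈ S such that Z(x,i) = {z ∈ Z(x) : z_i = ℓ_∞(z)} is nonempty. Then L_∞(x,i) = max{ℓ_∞(z) : z ∈ Z(x,i)} satisfies x/a_i − k·a_k ≤ L_∞(x,i) ≤ x/a_i. -/
open Finset

/-- If `Z(x,i)` is nonempty, then `L_∞(x,i) = max 𝓛∞(x,i)` satisfies
`x/a_i − k·a_k ≤ L_∞(x,i) ≤ x/a_i`. -/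
theorem stmt_1 (k : ℕ) (hk : 1 ≤ k) (a : Fin k → ℕ)
    (hmono : StrictMono a)
    (hgcd : Finset.univ.gcd a = 1)
    (hmin : MinimalGens a)
    (i : Fin k) (x : ℕ) (hx : (Zfac a x).Nonempty)
    (hne : (LinfSetI a x i).Nonempty) :
    (x : ℚ) / (a i : ℚ) - (k : ℚ) * (a ⟨k - 1, by omega⟩ : ℚ) ≤ ((sSup (LinfSetI a x i) : ℕ) : ℚ) ∧
      ((sSup (LinfSetI a x i) : ℕ) : ℚ) ≤ (x : ℚ) / (a i : ℚ) := by
  have hpos : ∀ j, 0 < a j := by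
    intro j
    rcases Nat.eq_zero_or_pos (a j) with h | h
    · exact absurd ⟨fun _ => 0, rfl, by simp [h]⟩ (hmin j)
    · exact h
  have hbound : ∀ z, z ∈ Zfac a x → z i * a i ≤ x := by
    intro z hz
    have hz' : ∑ j, z j * a j = x := hz
    rw [← hz']
    exact Finset.single_le_sum (f := fun j => z j * a j) (fun j _ => Nat.zero_le _)
      (Finset.mem_univ i)
  have hbdd : BddAbove (LinfSetI a x i) := by
    refine ⟨x, ?_⟩
    rintro _ ⟨z, ⟨hz, hzi⟩, rfl⟩
    have h1 := hbound z hz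
    have h2 := hpos i
    rw [← hzi]
    nlinarith
  obtain ⟨z, ⟨hz, hzi⟩, hzs⟩ := Nat.sSup_mem hne hbdd
  have hzx : ∑ j, z j * a j = x := hz
  have hle : ∀ j, z j ≤ z i := by
    intro j
    rw [hzi]
    exact Finset.le_sup (f := z) (Finset.mem_univ j)
  -- maximality forces the other coordinates to be small
  have hsmall : ∀ j, j ≠ i → z j < a i := by
    intro j hji
    by_contra hcon
    have hcon' : a i ≤ z j := not_lt.mp hcon
    let w : Fin k → ℕ := fun l => if l = i then z i + a j else if l = j then z j - a i else z l
    have hwi : w i = z i + a j := by simp [w]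
    have hwle : ∀ l, w l ≤ w i := by
      intro l
      rw [hwi]
      have h1 := hle l
      have h2 := hle j
      simp only [w]
      split_ifs <;> omega
    have hwl : w i = linf w :=
      le_antisymm (Finset.le_sup (f := w) (Finset.mem_univ i))
        (Finset.sup_le fun l _ => hwle l)
    have hsum : ∑ l, (w l * a l + if l = j then a i * a j else 0)
        = ∑ l, (z l * a l + if l = i then a i * a j else 0) := by
      apply Finset.sum_congr rfl
      intro l _
      by_cases h1 : l = i
      · subst h1
        simp [w, hji.symm]
        ring
      · by_cases h2 : l = j
        · subst h2
          simp only [w, h1, if_true, if_false]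
          obtain ⟨c, hc⟩ := Nat.exists_eq_add_of_le hcon'
          rw [hc, Nat.add_sub_cancel_left]
          ring
        · simp [w, h1, h2]
    rw [Finset.sum_add_distrib, Finset.sum_add_distrib] at hsum
    simp only [Finset.sum_ite_eq', Finset.mem_univ, if_true] at hsum
    have hwx : w ∈ Zfac a x := by
      change ∑ l, w l * a l = x
      omega
    have := le_csSup hbdd (⟨w, ⟨hwx, hwl⟩, rfl⟩ : linf w ∈ LinfSetI a x i)
    have := hpos j
    omega
  have hai : (0 : ℚ) < a i := by exact_mod_cast hpos i
  rw [← hzs, ← hzi]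
  constructor
  · have hlast : ∀ j, a j ≤ a ⟨k - 1, by omega⟩ := by
      intro j
      apply hmono.monotone
      rw [Fin.le_def]
      have := j.2
      simp only
      omega
    have hub : x ≤ z i * a i + k * (a i * a ⟨k - 1, by omega⟩) := by
      calc x = ∑ j, z j * a j := hzx.symm
        _ ≤ ∑ j, ((if j = i then z i * a i else 0) + a i * a ⟨k - 1, by omega⟩) := by
          apply Finset.sum_le_sum
          intro j _
          by_cases h : j = i
          · subst h
            simp
          · simp only [h, if_false, zero_add]
            exact Nat.mul_le_mul (hsmall j h).le (hlast j)
        _ = _ := by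
          rw [Finset.sum_add_distrib]
          simp
    have hub' : (x : ℚ) ≤ z i * a i + k * (a i * a ⟨k - 1, by omega⟩) := by exact_mod_cast hub
    rw [sub_le_iff_le_add, div_le_iff₀ hai]
    linarith
  · rw [le_div_iff₀ hai]
    exact_mod_cast hbound z hz
end

section
/- Let S = ⟨a_1, …, a_k⟩ be a numerical semigroup with minimal generators a_1 < ⋯ < a_k, let A = a_1 + ⋯ + a_k, g_i = gcd{a_j : j ≠ i}, S_i = ⟨a_j/g_i : j ≠ i⟩, and fix a_i' ∈ ℤ with a_i' a_i ≡ 1 (mod g_i). Then for each i = 1,…,k there exists B_i ∈ ℤ (one may take B_i = g_i(F(S_i)+1)/a_i) such that for every x ∈ S: [x/A + a_k, x/a_i − B_i] ∩ (g_iℤ + a_i' x) ⊆ 𝓛_∞(x,i) ⊆ g_iℤ + a_i' x. -/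
open Finset

theorem comb_of_closure {k : ℕ} (a : Fin k → ℕ) (i : Fin k) (y : ℕ)
    (hy : y ∈ AddSubmonoid.closure (a '' {j | j ≠ i})) :
    ∃ z : Fin k → ℕ, z i = 0 ∧ ∑ j, z j * a j = y := by
  induction hy using AddSubmonoid.closure_induction with
  | mem x hx =>
    obtain ⟨j, hj, rfl⟩ := hx
    refine ⟨Pi.single j 1, ?_, ?_⟩
    · exact Pi.single_eq_of_ne (fun h => hj h.symm) 1
    · rw [Finset.sum_eq_single j]
      · simp
      · intro b _ hb
        simp [Pi.single_eq_of_ne hb]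
      · simp
  | zero => exact ⟨0, rfl, by simp⟩
  | add x y _ _ hx hy =>
    obtain ⟨z, hz, rfl⟩ := hx
    obtain ⟨w, hw, rfl⟩ := hy
    exact ⟨z + w, by simp [hz, hw], by simp [add_mul, Finset.sum_add_distrib]⟩

theorem balance {k : ℕ} (a : Fin k → ℕ) (hpos : ∀ j, 0 < a j) (M : ℕ) (hM : ∀ j, a j ≤ M)
    (i : Fin k) (ℓ x : ℕ)
    (hx : x + (∑ j, a j) * M ≤ (∑ j, a j) * ℓ) (n : ℕ) :
    ∀ z : Fin k → ℕ, z i = ℓ → ∑ j, z j * a j = x → ∑ j, (z j - ℓ) ≤ n →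
      ∃ w : Fin k → ℕ, w i = ℓ ∧ ∑ j, w j * a j = x ∧ ∀ j, w j ≤ ℓ := by
  induction n with
  | zero =>
    intro z hz hs hn
    refine ⟨z, hz, hs, fun j => ?_⟩
    have := Finset.single_le_sum (f := fun j => z j - ℓ) (fun _ _ => Nat.zero_le _)
      (Finset.mem_univ j)
    omega
  | succ n ih =>
    intro z hz hs hn
    by_cases hall : ∀ j, z j ≤ ℓ
    · exact ⟨z, hz, hs, hall⟩
    push Not at hall
    obtain ⟨j, hj⟩ := hall
    have hMpos : 0 < M := (hpos j).trans_le (hM j)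
    have hMl : M ≤ ℓ := by
      have hA : 0 < ∑ j, a j := (hpos j).trans_le
        (Finset.single_le_sum (f := a) (fun _ _ => Nat.zero_le _) (Finset.mem_univ j))
      exact Nat.le_of_mul_le_mul_left ((Nat.le_add_left _ _).trans hx) hA
    have hm : ∃ m, z m + M ≤ ℓ := by
      by_contra hcon
      push Not at hcon
      have h1 : ∑ m, ℓ * a m < ∑ m, (z m + M) * a m :=
        Finset.sum_lt_sum (fun m _ => Nat.mul_le_mul_right _ (hcon m).le)
          ⟨j, Finset.mem_univ j, Nat.mul_lt_mul_of_pos_right (hcon j) (hpos j)⟩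
      simp only [add_mul, Finset.sum_add_distrib, ← Finset.mul_sum, hs] at h1
      nlinarith
    obtain ⟨m, hm⟩ := hm
    have hjm : j ≠ m := by rintro rfl; omega
    have hji : j ≠ i := by rintro rfl; omega
    have hmi : m ≠ i := by rintro rfl; omega
    have haj := hM j
    have ham := hM m
    have hpm := hpos m
    set w : Fin k → ℕ := Function.update (Function.update z j (z j - a m)) m (z m + a j) with hw
    have hwm : w m = z m + a j := by simp [hw]
    have hwj : w j = z j - a m := by simp [hw, hjm]
    have hwo : ∀ t, t ≠ j → t ≠ m → w t = z t := by
      intro t h1 h2; simp [hw, h1, h2]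
    have key : ∀ f : ℕ → Fin k → ℕ, ∃ R, ∑ t, f (z t) t = f (z j) j + (f (z m) m + R) ∧
        ∑ t, f (w t) t = f (w j) j + (f (w m) m + R) := by
      intro f
      have hmem : m ∈ Finset.univ.erase j := by simp [hjm.symm]
      refine ⟨∑ t ∈ (Finset.univ.erase j).erase m, f (z t) t, ?_, ?_⟩
      · rw [Finset.add_sum_erase _ (fun t => f (z t) t) hmem,
          Finset.add_sum_erase _ (fun t => f (z t) t) (Finset.mem_univ j)]
      · have : ∑ t ∈ (Finset.univ.erase j).erase m, f (z t) t
            = ∑ t ∈ (Finset.univ.erase j).erase m, f (w t) t := by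
          refine Finset.sum_congr rfl fun t ht => ?_
          simp only [Finset.mem_erase] at ht
          rw [hwo t ht.2.1 ht.1]
        rw [this, Finset.add_sum_erase _ (fun t => f (w t) t) hmem,
          Finset.add_sum_erase _ (fun t => f (w t) t) (Finset.mem_univ j)]
    refine ih w ?_ ?_ ?_
    · rw [hwo i hji.symm hmi.symm, hz]
    · obtain ⟨R, h1, h2⟩ := key (fun c t => c * a t)
      rw [h2, ← hs, h1, hwj, hwm]
      have : a m ≤ z j := by omega
      obtain ⟨c, hc⟩ := Nat.exists_eq_add_of_le this
      rw [hc, Nat.add_sub_cancel_left]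
      ring
    · obtain ⟨R, h1, h2⟩ := key (fun c t => c - ℓ)
      rw [h2, hwj, hwm]
      rw [h1] at hn
      omega

/-- Theorem (Atlantis): for each `i` there is `B_i ∈ ℤ` with
`[x/A + a_k, x/a_i − B_i] ∩ (g_iℤ + a_i'x) ⊆ 𝓛∞(x,i) ⊆ g_iℤ + a_i'x` for all `x ∈ S`. -/
theorem stmt_2 (k : ℕ) (hk : 2 ≤ k) (a : Fin k → ℕ)
    (hmono : StrictMono a)
    (hgcd : Finset.univ.gcd a = 1)
    (hmin : MinimalGens a)
    (A : ℕ) (hA : A = ∑ i, a i)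
    (i : Fin k) (g : ℕ) (hg : g = (Finset.univ.erase i).gcd a)
    (a' : ℤ) (ha' : (g : ℤ) ∣ (a' * (a i : ℤ) - 1)) :
    ∃ B : ℤ, ∀ x : ℕ, (Zfac a x).Nonempty →
      (∀ ℓ : ℕ,
          ((x : ℚ) / (A : ℚ) + (a ⟨k - 1, by omega⟩ : ℚ) ≤ (ℓ : ℚ) ∧
            (ℓ : ℚ) ≤ (x : ℚ) / (a i : ℚ) - (B : ℚ) ∧
            (g : ℤ) ∣ ((ℓ : ℤ) - a' * (x : ℤ))) →
          ℓ ∈ LinfSetI a x i) ∧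
      (∀ ℓ ∈ LinfSetI a x i, (g : ℤ) ∣ ((ℓ : ℤ) - a' * (x : ℤ))) := by
  have hpos : ∀ j, 0 < a j := by
    intro j
    rcases Nat.eq_zero_or_pos (a j) with h | h
    · exact absurd ⟨0, rfl, by simp [h]⟩ (hmin j)
    · exact h
  have hgd : ∀ j, j ≠ i → g ∣ a j := by
    intro j hj
    rw [hg]
    exact Finset.gcd_dvd (by simp [hj])
  obtain ⟨n, hn⟩ := Nat.exists_mem_closure_of_ge (a '' {j | j ≠ i})
  have hsg : Nat.setGcd (a '' {j | j ≠ i}) ∣ g := by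
    rw [hg]
    refine Finset.dvd_gcd fun j hj => ?_
    exact Nat.setGcd_dvd_of_mem ⟨j, by simpa using hj, rfl⟩
  refine ⟨n, fun x _ => ⟨?_, ?_⟩⟩
  · rintro ℓ ⟨h1, h2, h3⟩
    set M := a ⟨k - 1, by omega⟩ with hMdef
    have hM : ∀ j, a j ≤ M := fun j => hmono.monotone (by
      rw [Fin.le_def]; simp only; omega)
    have hApos : 0 < A := by
      rw [hA]
      exact (hpos i).trans_le
        (Finset.single_le_sum (f := a) (fun _ _ => Nat.zero_le _) (Finset.mem_univ i))
    have hx : x + A * M ≤ A * ℓ := by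
      have hAq : (0 : ℚ) < A := by exact_mod_cast hApos
      have : (x : ℚ) + A * M ≤ A * ℓ := by
        have := mul_le_mul_of_nonneg_left h1 hAq.le
        rwa [mul_add, mul_div_cancel₀ _ hAq.ne'] at this
      exact_mod_cast this
    have hx2 : a i * ℓ + a i * n ≤ x := by
      have hAq : (0 : ℚ) < a i := by exact_mod_cast hpos i
      have : (a i : ℚ) * ℓ + a i * n ≤ x := by
        have := mul_le_mul_of_nonneg_left h2 hAq.le
        rw [mul_sub, mul_div_cancel₀ _ hAq.ne'] at this
        push_cast at this
        linarith
      exact_mod_cast this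
    obtain ⟨y, hy⟩ := Nat.exists_eq_add_of_le ((Nat.le_add_right _ _).trans hx2)
    have hyn : n ≤ y := by
      have := Nat.le_mul_of_pos_left n (hpos i)
      omega
    have hgy : g ∣ y := by
      have : (g : ℤ) ∣ (y : ℤ) := by
        have e : (y : ℤ) = -(a i : ℤ) * ((ℓ : ℤ) - a' * x) - x * (a' * a i - 1) := by
          have : (x : ℤ) = a i * ℓ + y := by exact_mod_cast hy
          linear_combination -this
        rw [e]
        exact dvd_sub (h3.mul_left _) (ha'.mul_left _)
      exact_mod_cast this
    obtain ⟨z, hz0, hzs⟩ := comb_of_closure a i y (hn y hyn (hsg.trans hgy))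
    have hsum : ∑ j, (z + Pi.single i ℓ : Fin k → ℕ) j * a j = x := by
      simp only [Pi.add_apply, add_mul, Finset.sum_add_distrib, hzs]
      rw [Finset.sum_eq_single i]
      · rw [Pi.single_eq_same, hy]; ring
      · intro b _ hb
        simp [Pi.single_eq_of_ne hb]
      · simp
    obtain ⟨w, hwi, hws, hwl⟩ := balance a hpos M hM i ℓ x (by rw [← hA]; exact hx) _
      (z + Pi.single i ℓ) (by simp [hz0]) hsum le_rfl
    have hl : linf w = ℓ := by
      apply le_antisymm
      · exact Finset.sup_le fun j _ => hwl j
      · rw [← hwi]; exact Finset.le_sup (f := w) (Finset.mem_univ i)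
    exact ⟨w, ⟨hws, by rw [hl, hwi]⟩, hl⟩
  · rintro ℓ ⟨z, ⟨hz, hzi⟩, rfl⟩
    have hz' : ∑ j, z j * a j = x := hz
    rw [← hzi, ← hz', ← Finset.add_sum_erase _ _ (Finset.mem_univ i)]
    have hR : g ∣ ∑ j ∈ Finset.univ.erase i, z j * a j :=
      Finset.dvd_sum fun j hj => (hgd j (Finset.ne_of_mem_erase hj)).mul_left _
    obtain ⟨c, hc⟩ := hR
    rw [hc]
    obtain ⟨d, hd⟩ := ha'
    refine ⟨-(z i * d) - a' * c, ?_⟩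
    push_cast
    linear_combination -(z i : ℤ) * hd
end

section
/- Let S = ⟨a_1, …, a_k⟩ be a numerical semigroup with minimal generators a_1 < ⋯ < a_k and fix B > 0 and i ∈ {1,…,k}. Then for all sufficiently large x ∈ S, 𝓛_∞(x + a_i, i) ∩ [(x + a_i)/a_i − B, ∞) = 1 + (𝓛_∞(x, i) ∩ [x/a_i − B, ∞)), i.e., the portion of 𝓛_∞(x,i) within B of its top end shifts by exactly 1 when x is replaced by x + a_i. -/
open Finset

theorem mem_LinfSetI_iff {k : ℕ} (a : Fin k → ℕ) (x : ℕ) (i : Fin k) (l : ℕ) :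
    l ∈ LinfSetI a x i ↔ ∃ z : Fin k → ℕ, ∑ j, z j * a j = x ∧ z i = l ∧ ∀ j, z j ≤ l := by
  constructor
  · rintro ⟨z, ⟨hz, hi⟩, rfl⟩
    exact ⟨z, hz, hi, fun j => Finset.le_sup (f := z) (Finset.mem_univ j)⟩
  · rintro ⟨z, hz, rfl, hj⟩
    have h : linf z = z i :=
      le_antisymm (Finset.sup_le fun j _ => hj j) (Finset.le_sup (f := z) (Finset.mem_univ i))
    exact ⟨z, ⟨hz, h.symm⟩, h⟩

theorem sum_add_single {k : ℕ} (a z : Fin k → ℕ) (i : Fin k) :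
    ∑ j, (z + Pi.single i 1 : Fin k → ℕ) j * a j = ∑ j, z j * a j + a i := by
  simp [add_mul, Finset.sum_add_distrib, Pi.single_apply]

/-- The portion of `𝓛∞(x,i)` within `B` of its top end shifts by exactly `1`
when `x` is replaced by `x + a_i`, for all sufficiently large `x ∈ S`. -/
theorem stmt_3 (k : ℕ) (a : Fin k → ℕ)
    (hmono : StrictMono a)
    (hgcd : Finset.univ.gcd a = 1)
    (hmin : MinimalGens a)
    (B : ℚ) (hB : 0 < B) (i : Fin k) :
    ∃ N : ℕ, ∀ x : ℕ, N ≤ x → (Zfac a x).Nonempty →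
      {ℓ : ℕ | ℓ ∈ LinfSetI a (x + a i) i ∧
          ((x : ℚ) + (a i : ℚ)) / (a i : ℚ) - B ≤ (ℓ : ℚ)} =
        (fun n => 1 + n) '' {ℓ : ℕ | ℓ ∈ LinfSetI a x i ∧
          (x : ℚ) / (a i : ℚ) - B ≤ (ℓ : ℚ)} := by
  have hpos : ∀ j, 0 < a j := by
    intro j
    rcases Nat.eq_zero_or_pos (a j) with h | h
    · exact absurd ⟨fun _ => 0, rfl, by simp [h]⟩ (hmin j)
    · exact h
  have hai : (0 : ℚ) < a i := by exact_mod_cast hpos i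
  refine ⟨⌈(a i : ℚ) * (B + B * a i)⌉₊, fun x hx _ => ?_⟩
  have hx' : B + B * a i ≤ (x : ℚ) / a i := by
    rw [le_div_iff₀ hai]
    have := Nat.ceil_le.mp hx
    linarith
  have hdiv : ((x : ℚ) + a i) / a i = x / a i + 1 := by
    rw [add_div, div_self hai.ne']
  ext l
  simp only [Set.mem_ofPred_eq, Set.mem_image, mem_LinfSetI_iff, hdiv]
  constructor
  · rintro ⟨⟨z, hz, rfl, hj⟩, hl⟩
    have hBa : 0 < B * a i := mul_pos hB hai
    have hone : 1 ≤ z i := by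
      have : (1 : ℚ) ≤ z i := by linarith
      exact_mod_cast this
    have hother : ∀ j, j ≠ i → z j + 1 ≤ z i := by
      intro j hji
      have h1 : z i * a i + z j * a j ≤ x + a i := by
        rw [← hz, ← Finset.sum_pair (f := fun t => z t * a t) hji.symm]
        exact Finset.sum_le_sum_of_subset (Finset.subset_univ _)
      have h2 : z j ≤ z j * a j := Nat.le_mul_of_pos_right _ (hpos j)
      have h3 : (z i : ℚ) * a i + z j ≤ x + a i := by
        exact_mod_cast (by omega : z i * a i + z j ≤ x + a i)
      have h4 : ((x : ℚ) / a i + 1 - B) * a i ≤ z i * a i :=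
        mul_le_mul_of_nonneg_right hl hai.le
      have h5 : (x : ℚ) / a i * a i = x := div_mul_cancel₀ _ hai.ne'
      have h6 : (z j : ℚ) ≤ B * a i := by nlinarith
      have h7 : (z j : ℚ) + 1 ≤ z i := by linarith
      exact_mod_cast h7
    have hzz : z - Pi.single i 1 + Pi.single i 1 = z := by
      ext j
      by_cases h : j = i
      · subst h; simp; omega
      · simp [h]
    refine ⟨z i - 1, ⟨⟨z - Pi.single i 1, ?_, by simp, ?_⟩, ?_⟩, by omega⟩
    · have := sum_add_single a (z - Pi.single i 1) i
      rw [hzz] at this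
      omega
    · intro j
      by_cases h : j = i
      · subst h; simp
      · have := hother j h
        simp [h]; omega
    · push_cast [Nat.cast_sub hone]
      linarith
  · rintro ⟨n, ⟨⟨z, hz, rfl, hj⟩, hl⟩, rfl⟩
    refine ⟨⟨z + Pi.single i 1, by rw [sum_add_single, hz], by simp [add_comm], ?_⟩, ?_⟩
    · intro j
      have := hj j
      by_cases h : j = i
      · subst h; simp [add_comm]
      · simp [h]; omega
    · push_cast
      linarith
end

section
/- Let S = ⟨a_1, …, a_k⟩ be a numerical semigroup with minimal generators a_1 < ⋯ < a_k, let A = a_1 + ⋯ + a_k, and fix B' > 0. Then for all sufficiently large x ∈ S, 𝓛_∞(x + A) ∩ [0, (x + A)/A + B'] = 1 + (𝓛_∞(x) ∩ [0, x/A + B']), i.e., the portion of 𝓛_∞(x) within B' of its bottom end shifts by exactly 1 when x is replaced by x + A. -/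
open Finset

lemma linf_add_one {k : ℕ} (hk : 0 < k) (z : Fin k → ℕ) :
    linf (fun j => z j + 1) = 1 + linf z := by
  unfold linf
  apply le_antisymm
  · apply Finset.sup_le
    intro j hj
    have := Finset.le_sup (f := z) hj
    omega
  · obtain ⟨j, hj, h⟩ := Finset.exists_mem_eq_sup (Finset.univ : Finset (Fin k))
      ⟨⟨0, hk⟩, Finset.mem_univ _⟩ z
    have := Finset.le_sup (f := fun j => z j + 1) hj
    rw [h]
    omega

/-- The portion of `𝓛∞(x)` within `B'` of its bottom end shifts by exactly `1`
when `x` is replaced by `x + A`, for all sufficiently large `x ∈ S`. -/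
theorem stmt_4 (k : ℕ) (a : Fin k → ℕ)
    (hmono : StrictMono a)
    (hgcd : Finset.univ.gcd a = 1)
    (hmin : MinimalGens a)
    (A : ℕ) (hA : A = ∑ i, a i)
    (B' : ℚ) (hB' : 0 < B') :
    ∃ N : ℕ, ∀ x : ℕ, N ≤ x → (Zfac a x).Nonempty →
      {ℓ : ℕ | ℓ ∈ LinfSet a (x + A) ∧
          (ℓ : ℚ) ≤ ((x : ℚ) + (A : ℚ)) / (A : ℚ) + B'} =
        (fun n => 1 + n) '' {ℓ : ℕ | ℓ ∈ LinfSet a x ∧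
          (ℓ : ℚ) ≤ (x : ℚ) / (A : ℚ) + B'} := by
  have hk : 0 < k := by
    rcases Nat.eq_zero_or_pos k with h | h
    · subst h
      simp at hgcd
    · exact h
  have hpos : ∀ i, 1 ≤ a i := by
    intro i
    rcases Nat.eq_zero_or_pos (a i) with h | h
    · exact absurd ⟨fun _ => 0, rfl, by simp [h]⟩ (hmin i)
    · exact h
  have hApos : 0 < A := by
    rw [hA]
    have h1 := Finset.single_le_sum (f := a) (fun i _ => Nat.zero_le _)
      (Finset.mem_univ (⟨0, hk⟩ : Fin k))
    have := hpos ⟨0, hk⟩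
    omega
  have hAq : (0 : ℚ) < A := by exact_mod_cast hApos
  refine ⟨⌈(A : ℚ) * B' * A⌉₊, fun x hx _ => ?_⟩
  have hxq : (A : ℚ) * B' * A ≤ x := (Nat.le_ceil _).trans (by exact_mod_cast hx)
  have hdiv : ((x : ℚ) + A) / A = x / A + 1 := by field_simp
  ext ℓ
  constructor
  · rintro ⟨⟨z, hz, rfl⟩, hle⟩
    have hz' : ∑ j, z j * a j = x + A := hz
    have hz1 : ∀ i, 1 ≤ z i := by
      intro i
      by_contra hi
      have hi0 : z i = 0 := by omega
      have h1 : ∑ j, z j * a j + linf z * a i ≤ linf z * A := by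
        rw [hA, ← Finset.add_sum_erase _ _ (Finset.mem_univ i),
          ← Finset.add_sum_erase _ a (Finset.mem_univ i), hi0, mul_add, Finset.mul_sum]
        have : ∑ j ∈ Finset.univ.erase i, z j * a j
            ≤ ∑ j ∈ Finset.univ.erase i, linf z * a j :=
          Finset.sum_le_sum fun j _ =>
            Nat.mul_le_mul_right _ (Finset.le_sup (f := z) (Finset.mem_univ j))
        omega
      have h2 : x + A + linf z ≤ linf z * A := by
        have := Nat.mul_le_mul_left (linf z) (hpos i)
        omega
      have h3 : (x : ℚ) + A + linf z ≤ linf z * A := by exact_mod_cast h2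
      have h4 : (linf z : ℚ) * A ≤ x + A + B' * A := by
        have := mul_le_mul_of_nonneg_right hle hAq.le
        rwa [add_mul, div_mul_cancel₀ _ hAq.ne'] at this
      have h5 : (linf z : ℚ) ≤ B' * A := by linarith
      have h6 := mul_le_mul_of_nonneg_right h5 hAq.le
      have h7 : (0 : ℚ) ≤ linf z := Nat.cast_nonneg _
      nlinarith
    have hzz : z = fun j => (z j - 1) + 1 := by
      funext j
      have := hz1 j
      omega
    have hl : linf z = 1 + linf (fun j => z j - 1) := by
      conv_lhs => rw [hzz]
      exact linf_add_one hk _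
    refine ⟨linf (fun j => z j - 1), ⟨⟨_, ?_, rfl⟩, ?_⟩, hl.symm⟩
    · change ∑ j, (z j - 1) * a j = x
      rw [hzz] at hz'
      simp only [add_mul, Finset.sum_add_distrib, one_mul, ← hA] at hz'
      omega
    · rw [hl, hdiv] at hle
      push_cast at hle
      linarith
  · rintro ⟨_, ⟨⟨z, hz, rfl⟩, hle⟩, rfl⟩
    have hz' : ∑ j, z j * a j = x := hz
    refine ⟨⟨fun j => z j + 1, ?_, linf_add_one hk z⟩, ?_⟩
    · change ∑ j, (z j + 1) * a j = x + A
      simp only [add_mul, Finset.sum_add_distrib, one_mul, ← hA, hz']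
    · rw [hdiv]
      push_cast
      linarith
end

section
/- Let S = ⟨a_1, …, a_k⟩ be a numerical semigroup with minimal generators a_1 < ⋯ < a_k (k ≥ 3), let A = a_1 + ⋯ + a_k, g_1 = gcd{a_j : j ≠ 1}, and p = lcm(a_1, g_1 a_2, A). Then for all sufficiently large x ∈ S, Δ_∞(x + p) = Δ_∞(x); that is, the function x ↦ Δ_∞(x) is eventually periodic with period p. -/
open Finset

def LZ {ι : Type} (S : ι → ℤ → Prop) (a : ι → ℤ) (A : ℤ) (x m : ℤ) : Prop :=
  ∃ i, S i (x - m * a i) ∧ S i (m * A - x)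

def DZ (L : ℤ → Prop) (d : ℤ) : Prop :=
  ∃ u, L u ∧ L (u + d) ∧ 0 < d ∧ ∀ t, u < t → t < u + d → ¬ L t

lemma DZ_shift (L L' : ℤ → Prop) (u d s : ℤ) (h0 : L u) (h1 : L (u + d)) (hd : 0 < d)
    (hn : ∀ t, u < t → t < u + d → ¬ L t)
    (h : ∀ t, u ≤ t → t ≤ u + d → (L t ↔ L' (t + s))) : DZ L' d := by
  refine ⟨u + s, (h u (by omega) (by omega)).1 h0, ?_, hd, ?_⟩
  · have := (h (u + d) (by omega) (by omega)).1 h1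
    convert this using 1; ring
  · intro t ht1 ht2 hL
    apply hn (t - s) (by omega) (by omega)
    apply (h (t - s) (by omega) (by omega)).2
    convert hL using 1; ring

lemma class_exists (g a : ℤ) (hg : 1 ≤ g) (h : IsCoprime g a) (c x : ℤ) :
    ∃ w, c < w ∧ w ≤ c + g ∧ g ∣ x - w * a := by
  obtain ⟨r, s, hrs⟩ := h
  have h1 := Int.emod_nonneg (s * x - c - 1) (show g ≠ 0 by omega)
  have h2 := Int.emod_lt_of_pos (s * x - c - 1) (show 0 < g by omega)
  have h3 := Int.emod_add_mul_ediv (s * x - c - 1) g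
  set q := (s * x - c - 1) / g
  refine ⟨c + 1 + (s * x - c - 1) % g, by omega, by omega, r * x + q * a, ?_⟩
  have : c + 1 + (s * x - c - 1) % g = s * x - g * q := by linarith
  rw [this]
  linear_combination (-x) * hrs

set_option maxHeartbeats 4000000 in
lemma core {ι : Type} (S : ι → ℤ → Prop) (a g : ι → ℤ) (A F p : ℤ) (i1 i2 i3 : ι)
    (hpos : ∀ i, 1 ≤ a i) (h12 : a i1 + 1 ≤ a i2) (h23 : a i2 + 1 ≤ a i3)
    (hi : ∀ i, i = i1 ∨ i = i2 ∨ a i3 ≤ a i)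
    (hAlt : ∀ i, a i + 1 ≤ A) (hAg : ∀ i, g i ∣ A - a i) (hg : ∀ i, 1 ≤ g i)
    (hcop : IsCoprime (g i1) (g i2)) (hcop' : ∀ i, IsCoprime (g i) (a i))
    (hS0 : ∀ i n, S i n → 0 ≤ n) (hSg : ∀ i n, S i n → g i ∣ n) (hF : 0 ≤ F)
    (hSF : ∀ i n, F ≤ n → g i ∣ n → S i n)
    (hp0 : 0 ≤ p) (hpA : A ∣ p) (hp1 : a i1 ∣ p) (hp2 : g i1 * a i2 ∣ p) :
    ∃ N, ∀ x y, N ≤ x → N ≤ y → p ∣ y - x → |y - x| ≤ p → ∀ d, DZ (LZ S a A x) d → DZ (LZ S a A y) d := by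
  have hA1 : 1 ≤ A := by linarith [hpos i1, hAlt i1]
  obtain ⟨K, hK⟩ : ∃ K, K = F + (F + g i1) * A + p * A := ⟨_, rfl⟩
  obtain ⟨W, hW⟩ : ∃ W, W = g i1 * g i2 := ⟨_, rfl⟩
  have hg1 := hg i1
  have hg2 := hg i2
  have hW1 : 1 ≤ W := by nlinarith
  have hFg : 0 ≤ (F + g i1) * A := by positivity
  have hpA0 : 0 ≤ p * A := by positivity
  have hWA : 0 ≤ (W + g i1) * A := by positivity
  obtain ⟨M, hM⟩ : ∃ M, M = 2 * F + 2 * K + (F + g i1) * A + (W + g i1) * A + 1 := ⟨_, rfl⟩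
  have hM1 : 1 ≤ M := by linarith
  have hFK : F ≤ K := by linarith
  -- congruence transfer
  have hdv : ∀ i x m, g i ∣ x - m * a i ↔ g i ∣ m * A - x := by
    intro i x m
    have h : m * A - x = m * (A - a i) - (x - m * a i) := by ring
    rw [h]
    constructor
    · intro h1; exact dvd_sub (Dvd.dvd.mul_left (hAg i) m) h1
    · intro h1
      have := dvd_sub (Dvd.dvd.mul_left (hAg i) m) h1
      simpa using this
  have hbig : ∀ x m, A * M ≤ x → x ≤ m * A → M ≤ m := by
    intro x m h1 h2
    by_contra hc
    push Not at hc
    nlinarith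
  have hLpos : ∀ x m, LZ S a A x m → x ≤ m * A := by
    rintro x m ⟨i, -, h⟩
    linarith [hS0 _ _ h]
  have hmem : ∀ i x m, g i ∣ x - m * a i → m * a i + F ≤ x → x + F ≤ m * A → LZ S a A x m := by
    intro i x m h1 h2 h3
    exact ⟨i, hSF _ _ (by linarith) h1, hSF _ _ (by linarith) ((hdv _ _ _).1 h1)⟩
  -- bottom
  have hbot : ∀ x m, A * M ≤ x → m * A ≤ x + K → (LZ S a A x m ↔ ∃ i, S i (m * A - x)) := by
    intro x m hx hm
    constructor
    · rintro ⟨i, -, h⟩; exact ⟨i, h⟩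
    · rintro ⟨i, h⟩
      refine ⟨i, hSF _ _ ?_ ((hdv _ _ _).2 (hSg _ _ h)), h⟩
      have h0 := hS0 _ _ h
      have hmM := hbig x m hx (by linarith)
      nlinarith [hAlt i]
  -- middle
  have hmid : ∀ x m, A * M ≤ x → x ≤ m * a i2 + K → m * a i2 ≤ x + K →
      (LZ S a A x m ↔ (g i1 ∣ x - m * a i1 ∨ S i2 (x - m * a i2))) := by
    intro x m hx h1 h2
    have hmM : M - K ≤ m := by
      by_contra hc
      push Not at hc
      have h3 := hAlt i2
      have h4 := hpos i2
      have : m * a i2 ≤ (M - K) * a i2 := by nlinarith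
      have : (M - K) * a i2 ≤ (M - K) * A := by nlinarith
      nlinarith
    have hm0 : 0 ≤ m := by linarith
    have hmA : x + F ≤ m * A := by nlinarith [hAlt i2]
    constructor
    · rintro ⟨i, h3, h4⟩
      rcases hi i with rfl | rfl | h
      · exact Or.inl (hSg _ _ h3)
      · exact Or.inr h3
      · exfalso
        have := hS0 _ _ h3
        nlinarith
    · rintro (h | h)
      · exact hmem i1 x m h (by nlinarith) hmA
      · exact ⟨i2, h, hSF _ _ (by linarith) ((hdv _ _ _).1 (hSg _ _ h))⟩
  -- top
  have htop : ∀ x m, A * M ≤ x → x < m * a i2 → (LZ S a A x m ↔ S i1 (x - m * a i1)) := by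
    intro x m hx h1
    have hm0 : 0 ≤ m := by
      by_contra hc
      push Not at hc
      nlinarith [hpos i2]
    have hmM : M ≤ m := hbig x m hx (by nlinarith [hAlt i2])
    constructor
    · rintro ⟨i, h3, h4⟩
      have := hS0 _ _ h3
      rcases hi i with rfl | rfl | h
      · exact h3
      · linarith
      · exfalso
        nlinarith
    · intro h
      refine ⟨i1, h, hSF _ _ ?_ ((hdv _ _ _).1 (hSg _ _ h))⟩
      nlinarith [hAlt i2]
  -- small gaps
  have hsmall : ∀ x d, A * M ≤ x → 0 < d → d ≤ g i1 → d ≤ g i2 → DZ (LZ S a A x) d := by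
    intro x d hx hd hd1 hd2
    -- choose position
    have h3pos := hpos i3
    have e1 := Int.emod_nonneg x (show a i3 ≠ 0 by omega)
    have e2 := Int.emod_lt_of_pos x (show 0 < a i3 by omega)
    have e3 := Int.emod_add_mul_ediv x (a i3)
    set q := x / a i3 with hq
    have hqM : M ≤ q := by
      rw [hq, Int.le_ediv_iff_mul_le (by omega)]
      nlinarith [hAlt i3]
    obtain ⟨w1, -, -, hw1⟩ := class_exists (g i1) (a i1) hg1 (hcop' i1) 0 x
    obtain ⟨w2, -, -, hw2⟩ := class_exists (g i2) (a i2) hg2 (hcop' i2) 0 x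
    obtain ⟨u, hu1, hu2, hu3, hu4⟩ : ∃ u, q < u ∧ u ≤ q + W ∧ g i1 ∣ u + d - w1 ∧ g i2 ∣ u - w2 := by
      obtain ⟨r, s, hrs⟩ := hcop
      -- u0 = w2 * r g1 + (w1 - d) * s g2
      obtain ⟨u, h1, h2, h3⟩ := class_exists W 1 hW1 isCoprime_one_right q
        (w2 * (r * g i1) + (w1 - d) * (s * g i2))
      refine ⟨u, h1, h2, ?_, ?_⟩
      · have h4 : g i1 ∣ w2 * (r * g i1) + (w1 - d) * (s * g i2) - u * 1 :=
          dvd_trans ⟨g i2, hW⟩ h3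
        have : u + d - w1 = (w2 - w1 + d) * r * g i1 -
          (w2 * (r * g i1) + (w1 - d) * (s * g i2) - u * 1) := by
          linear_combination (w1 - d) * hrs
        rw [this]
        exact dvd_sub (Dvd.intro_left _ rfl) h4
      · have h4 : g i2 ∣ w2 * (r * g i1) + (w1 - d) * (s * g i2) - u * 1 :=
          dvd_trans ⟨g i1, by rw [hW]; ring⟩ h3
        have : u - w2 = (w1 - d - w2) * s * g i2 -
          (w2 * (r * g i1) + (w1 - d) * (s * g i2) - u * 1) := by
          linear_combination w2 * hrs
        rw [this]
        exact dvd_sub (Dvd.intro_left _ rfl) h4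
    have hxu : x < u * a i3 := by nlinarith
    have hc1 : g i1 ∣ x - (u + d) * a i1 := by
      have : x - (u + d) * a i1 = (x - w1 * a i1) - (u + d - w1) * a i1 := by ring
      rw [this]; exact dvd_sub hw1 (Dvd.dvd.mul_right hu3 _)
    have hc2 : g i2 ∣ x - u * a i2 := by
      have : x - u * a i2 = (x - w2 * a i2) - (u - w2) * a i2 := by ring
      rw [this]; exact dvd_sub hw2 (Dvd.dvd.mul_right hu4 _)
    have hA2 := hAlt i2
    have hA3 := hAlt i3
    have hv : (u + d) * a i2 + F ≤ x := by
      have h1 : (u + d) * a i2 ≤ (q + W + g i1) * a i2 := by nlinarith [hpos i2]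
      have h2 : (W + g i1) * a i2 ≤ (W + g i1) * A := by nlinarith
      have h3 : q * a i2 ≤ q * a i3 - q := by nlinarith
      nlinarith
    have hu0 : M ≤ u := by linarith
    have huA : x + F ≤ u * A := by nlinarith
    refine ⟨u, hmem i2 x u hc2 (by nlinarith [hpos i2]) huA,
      hmem i1 x (u + d) hc1 (by nlinarith) (by nlinarith), hd, ?_⟩
    rintro t ht1 ht2 ⟨i, h3, h4⟩
    rcases hi i with rfl | rfl | h
    · have h5 := hSg _ _ h3
      have h6 : g i ∣ (u + d - t) * a i := by
        have e : (u + d - t) * a i = x - t * a i - (x - (u + d) * a i) := by ring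
        rw [e]; exact dvd_sub h5 hc1
      have := Int.le_of_dvd (by omega) ((hcop' i).dvd_of_dvd_mul_right h6)
      omega
    · have h5 := hSg _ _ h3
      have h6 : g i ∣ (t - u) * a i := by
        have e : (t - u) * a i = x - u * a i - (x - t * a i) := by ring
        rw [e]; exact dvd_sub hc2 h5
      have := Int.le_of_dvd (by omega) ((hcop' i).dvd_of_dvd_mul_right h6)
      omega
    · have := hS0 _ _ h3
      nlinarith
  refine ⟨A * M, ?_⟩
  rintro x y hx hy hp habs d ⟨u, hu, hv, hd, hn⟩
  have huA := hLpos _ _ hu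
  have huM := hbig x u hx huA
  have hAi1 := hAlt i1
  have hAi2 := hAlt i2
  have hp1' := hpos i1
  have hp2' := hpos i2
  by_cases ha : u * A ≤ x + F
  · obtain ⟨w, hw1, hw2, hw3⟩ := class_exists (g i1) (a i1) hg1 (hcop' i1) (u + F) x
    have hwL : LZ S a A x w := by
      apply hmem i1 x w hw3
      · have h1 : w * a i1 ≤ (u + F + g i1) * a i1 := by nlinarith
        have h2 : (F + g i1) * a i1 ≤ (F + g i1) * A := by nlinarith
        nlinarith
      · nlinarith
    have hvw : u + d ≤ w := by
      by_contra hc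
      exact hn w (by omega) (by omega) hwL
    have hvA : (u + d) * A ≤ x + K := by
      have : (u + d) * A ≤ (u + F + g i1) * A := by nlinarith
      rw [hK]; linarith
    obtain ⟨s, hs⟩ := hpA.trans hp
    refine DZ_shift _ _ u d s hu hv hd hn ?_
    intro t ht1 ht2
    have h1 : t * A ≤ (u + d) * A := by nlinarith
    rw [hbot x t hx (by linarith), hbot y (t + s) hy (by linarith)]
    have : (t + s) * A - y = t * A - x := by linear_combination (-1 : ℤ) * hs
    rw [this]
  push Not at ha
  by_cases hb : (u + d) * a i2 + F ≤ x
  · have hle : ∀ j, a j ≤ a i2 → d ≤ g j := by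
      intro j hj
      by_contra hc
      push Not at hc
      obtain ⟨w, hw1, hw2, hw3⟩ := class_exists (g j) (a j) (hg j) (hcop' j) u x
      apply hn w hw1 (by omega)
      apply hmem j x w hw3
      · have h1 : w * a j ≤ w * a i2 := by nlinarith
        have h2 : w * a i2 ≤ (u + d) * a i2 := by nlinarith
        linarith
      · nlinarith
    exact hsmall y d hy hd (hle i1 (by linarith)) (hle i2 le_rfl)
  push Not at hb
  by_cases hc : x + p * A < u * a i2
  · obtain ⟨s, hs⟩ := hp1.trans hp
    have hsp : -p ≤ s := by
      by_contra hcc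
      push Not at hcc
      have := (abs_le.1 habs).1
      nlinarith
    have hs2 : -(p * A) ≤ s * (a i2 - a i1) := by
      have h1 : (-p) * (a i2 - a i1) ≤ s * (a i2 - a i1) :=
        mul_le_mul_of_nonneg_right hsp (by linarith)
      have h2 : p * (a i2 - a i1) ≤ p * A := mul_le_mul_of_nonneg_left (by linarith) hp0
      linarith
    refine DZ_shift _ _ u d s hu hv hd hn ?_
    intro t ht1 ht2
    have h1 : u * a i2 ≤ t * a i2 := mul_le_mul_of_nonneg_right ht1 (by linarith)
    have h2 : (t + s) * a i2 - y = (t * a i2 - x) + s * (a i2 - a i1) := by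
      linear_combination (-1 : ℤ) * hs
    rw [htop x t hx (by linarith), htop y (t + s) hy (by linarith)]
    have : y - (t + s) * a i1 = x - t * a i1 := by linear_combination hs
    rw [this]
  push Not at hc
  have hdg : d ≤ g i1 := by
    by_contra hcc
    push Not at hcc
    obtain ⟨w, hw1, hw2, hw3⟩ := class_exists (g i1) (a i1) hg1 (hcop' i1) u x
    apply hn w hw1 (by omega)
    apply hmem i1 x w hw3
    · have h1 : w * a i1 ≤ (u + g i1) * a i1 := by nlinarith
      have h2 : (F + g i1) * a i1 ≤ (F + g i1) * A := by nlinarith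
      nlinarith
    · nlinarith
  obtain ⟨s, hs⟩ := hp2.trans hp
  refine DZ_shift _ _ u d (g i1 * s) hu hv hd hn ?_
  intro t ht1 ht2
  have h1 : u * a i2 ≤ t * a i2 := by nlinarith
  have h2 : t * a i2 ≤ (u + d) * a i2 := by nlinarith
  have h4 : d * a i2 ≤ (F + g i1) * A := by
    have : d * a i2 ≤ g i1 * a i2 := by nlinarith
    have : g i1 * a i2 ≤ g i1 * A := by nlinarith
    nlinarith
  have h3 : (t + g i1 * s) * a i2 = t * a i2 + (y - x) := by rw [hs]; ring
  rw [hmid x t hx (by linarith) (by linarith), hmid y (t + g i1 * s) hy (by linarith) (by linarith)]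
  have h5 : y - (t + g i1 * s) * a i2 = x - t * a i2 := by linarith
  rw [h5]
  have h6 : y - (t + g i1 * s) * a i1 = (x - t * a i1) + g i1 * (s * (a i2 - a i1)) := by
    linear_combination hs
  rw [h6, Int.dvd_add_left (Dvd.intro _ rfl)]

/-- Membership in the semigroup generated by all generators other than `a i`. -/
def Sg {k : ℕ} (a : Fin k → ℕ) (i : Fin k) (n : ℤ) : Prop :=
  ∃ z : Fin k → ℕ, z i = 0 ∧ ∑ j, (z j : ℤ) * (a j : ℤ) = n

def gg {k : ℕ} (a : Fin k → ℕ) (i : Fin k) : ℕ := (Finset.univ.erase i).gcd a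

lemma gg_dvd {k : ℕ} (a : Fin k → ℕ) (i j : Fin k) (h : j ≠ i) : gg a i ∣ a j :=
  Finset.gcd_dvd (Finset.mem_erase.2 ⟨h, Finset.mem_univ _⟩)

lemma Sg_nonneg {k : ℕ} (a : Fin k → ℕ) (i : Fin k) (n : ℤ) (h : Sg a i n) : 0 ≤ n := by
  obtain ⟨z, -, rfl⟩ := h
  exact Finset.sum_nonneg fun j _ => by positivity

lemma Sg_dvd {k : ℕ} (a : Fin k → ℕ) (i : Fin k) (n : ℤ) (h : Sg a i n) : (gg a i : ℤ) ∣ n := by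
  obtain ⟨z, hz, rfl⟩ := h
  refine Finset.dvd_sum fun j _ => ?_
  by_cases hj : j = i
  · subst hj; simp [hz]
  · exact Dvd.dvd.mul_left (Int.natCast_dvd_natCast.2 (gg_dvd a i j hj)) _

lemma Sg_conductor_one {k : ℕ} (a : Fin k → ℕ) (i : Fin k) :
    ∃ F : ℕ, ∀ n : ℕ, F ≤ n → gg a i ∣ n → Sg a i n := by
  obtain ⟨F, hF⟩ := Nat.exists_mem_closure_of_ge (a '' {j | j ≠ i})
  refine ⟨F, fun n hn hd => ?_⟩
  have hm := hF n hn (dvd_trans (Finset.dvd_gcd fun j hj => ?_) hd)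
  · refine AddSubmonoid.closure_induction (motive := fun (m : ℕ) _ => Sg a i (m : ℤ)) ?_ ?_ ?_ hm
    · rintro _ ⟨j, hj, rfl⟩
      refine ⟨Pi.single j 1, ?_, ?_⟩
      · exact Pi.single_eq_of_ne (Ne.symm hj) _
      · rw [Finset.sum_eq_single j]
        · simp
        · intro b _ hb; simp [Pi.single_eq_of_ne hb]
        · simp
    · exact ⟨0, rfl, by simp⟩
    · rintro m1 m2 - - ⟨z, hz, h1⟩ ⟨w, hw, h2⟩
      refine ⟨z + w, by simp [hz, hw], ?_⟩
      push_cast [Pi.add_apply]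
      rw [← h1, ← h2, ← Finset.sum_add_distrib]
      exact Finset.sum_congr rfl fun j _ => by ring
  · exact Nat.setGcd_dvd_of_mem ⟨j, (Finset.mem_erase.1 hj).1, rfl⟩

lemma Sg_conductor {k : ℕ} (a : Fin k → ℕ) :
    ∃ F : ℤ, 0 ≤ F ∧ ∀ i n, F ≤ n → (gg a i : ℤ) ∣ n → Sg a i n := by
  choose F hF using Sg_conductor_one a
  refine ⟨((∑ i, F i : ℕ) : ℤ), by positivity, fun i n hn hd => ?_⟩
  have h0 : 0 ≤ n := le_trans (by positivity) hn
  lift n to ℕ using h0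
  refine hF i n ?_ (Int.natCast_dvd_natCast.1 hd)
  have h1 : F i ≤ ∑ i, F i := Finset.single_le_sum (fun _ _ => Nat.zero_le _) (Finset.mem_univ i)
  have h2 : (∑ i, F i) ≤ n := by exact_mod_cast hn
  omega

lemma coord_le {k : ℕ} (a : Fin k → ℕ) (ha : ∀ i, 1 ≤ a i) (z : Fin k → ℕ) (j : Fin k) :
    (z j : ℤ) ≤ ∑ j, (z j : ℤ) * (a j : ℤ) := by
  have h1 : (z j : ℤ) * (a j : ℤ) ≤ ∑ j, (z j : ℤ) * (a j : ℤ) :=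
    Finset.single_le_sum (f := fun j => (z j : ℤ) * (a j : ℤ)) (fun _ _ => by positivity) (Finset.mem_univ j)
  have h2 : (1 : ℤ) ≤ a j := by exact_mod_cast ha j
  nlinarith [Int.natCast_nonneg (z j)]

lemma sum_off {k : ℕ} (a : Fin k → ℕ) (i : Fin k) (q : ℤ) :
    ∑ j, (if j = i then 0 else q) * (a j : ℤ) = q * (∑ j, (a j : ℤ) - a i) := by
  have : ∀ j, (if j = i then 0 else q) * (a j : ℤ) =
      q * (a j : ℤ) - (if j = i then q * (a j : ℤ) else 0) := by
    intro j; split_ifs <;> ring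
  simp only [this, Finset.sum_sub_distrib, ← Finset.mul_sum, Finset.sum_ite_eq',
    Finset.mem_univ, if_true]
  ring

lemma box_half {k : ℕ} (a : Fin k → ℕ) (ha : ∀ i, 1 ≤ a i) (F : ℤ) (hF0 : 0 ≤ F)
    (hF : ∀ i n, F ≤ n → (gg a i : ℤ) ∣ n → Sg a i n) (i : Fin k) (B : ℤ)
    (hB : B = ∑ j, (a j : ℤ) - a i) (hB1 : 1 ≤ B) (hBg : (gg a i : ℤ) ∣ B) (m : ℕ)
    (hm : 2 * (F + B) ≤ m) (y : ℤ) (hy : 2 * y ≤ m * B) (hS : Sg a i y) :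
    ∃ t : Fin k → ℕ, t i = 0 ∧ (∀ j, t j ≤ m) ∧ ∑ j, (t j : ℤ) * (a j : ℤ) = y := by
  by_cases hyF : y < F
  · obtain ⟨z, hz, hzy⟩ := hS
    refine ⟨z, hz, fun j => ?_, hzy⟩
    have := coord_le a ha z j
    omega
  · push Not at hyF
    have e1 := Int.emod_nonneg (y - F) (show B ≠ 0 by omega)
    have e2 := Int.emod_lt_of_pos (y - F) (show 0 < B by omega)
    have e3 := Int.emod_add_mul_ediv (y - F) B
    have hq0 : 0 ≤ (y - F) / B := Int.ediv_nonneg (by omega) (by omega)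
    generalize (y - F) / B = q at *
    generalize (y - F) % B = r at *
    have hr : Sg a i (r + F) := by
      apply hF i _ (by omega)
      have : r + F = y - B * q := by linarith
      rw [this]
      exact dvd_sub (Sg_dvd _ _ _ hS) (Dvd.dvd.mul_right hBg _)
    obtain ⟨z, hz, hzr⟩ := hr
    lift q to ℕ using hq0
    have h2q : 2 * (q : ℤ) ≤ m := by
      by_contra hc
      push Not at hc
      nlinarith
    refine ⟨fun j => (if j = i then 0 else q) + z j, by simp [hz], fun j => ?_, ?_⟩
    · have := coord_le a ha z j
      show (if j = i then 0 else q) + z j ≤ m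
      split_ifs <;> omega
    · push_cast
      simp only [add_mul, Finset.sum_add_distrib]
      rw [hzr, sum_off, ← hB]
      linarith

lemma box_full {k : ℕ} (a : Fin k → ℕ) (ha : ∀ i, 1 ≤ a i) (F : ℤ) (hF0 : 0 ≤ F)
    (hF : ∀ i n, F ≤ n → (gg a i : ℤ) ∣ n → Sg a i n) (i : Fin k) (B : ℤ)
    (hB : B = ∑ j, (a j : ℤ) - a i) (hB1 : 1 ≤ B) (hBg : (gg a i : ℤ) ∣ B) (m : ℕ)
    (hm : 2 * (F + B) ≤ m) (y : ℤ) (hS : Sg a i y) (hS' : Sg a i (m * B - y)) :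
    ∃ t : Fin k → ℕ, t i = 0 ∧ (∀ j, t j ≤ m) ∧ ∑ j, (t j : ℤ) * (a j : ℤ) = y := by
  by_cases hy : 2 * y ≤ m * B
  · exact box_half a ha F hF0 hF i B hB hB1 hBg m hm y hy hS
  · obtain ⟨t, ht0, htm, hty⟩ :=
      box_half a ha F hF0 hF i B hB hB1 hBg m hm (m * B - y) (by linarith) hS'
    refine ⟨fun j => (if j = i then 0 else m) - t j, by simp, fun j => ?_, ?_⟩
    · show (if j = i then 0 else m) - t j ≤ m
      split_ifs <;> omega
    · have : ∀ j, (((if j = i then 0 else m) - t j : ℕ) : ℤ) =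
          (if j = i then 0 else (m : ℤ)) - t j := by
        intro j
        split_ifs with h
        · subst h; simp [ht0]
        · rw [Nat.cast_sub (htm j)]
      simp only [this, sub_mul, Finset.sum_sub_distrib]
      rw [hty, sum_off, ← hB]
      ring

lemma Linf_char {k : ℕ} (a : Fin k → ℕ) (ha : ∀ i, 1 ≤ a i) (F : ℤ) (hF0 : 0 ≤ F)
    (hF : ∀ i n, F ≤ n → (gg a i : ℤ) ∣ n → Sg a i n) (A : ℤ) (hA : A = ∑ j, (a j : ℤ))
    (hlt : ∀ i, (a i : ℤ) + 1 ≤ A) (hAg : ∀ i, (gg a i : ℤ) ∣ A - a i) (x m : ℕ) (hk : 0 < k)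
    (hx : A * (2 * (F + A)) ≤ x) :
    m ∈ LinfSet a x ↔ LZ (Sg a) (fun i => (a i : ℤ)) A x m := by
  constructor
  · rintro ⟨z, hz, rfl⟩
    have hzx : ∑ j, (z j : ℤ) * (a j : ℤ) = x := by
      have : ∑ j, z j * a j = x := hz
      exact_mod_cast this
    have hle : ∀ j, z j ≤ linf z := fun j => Finset.le_sup (f := z) (Finset.mem_univ j)
    have hne : (Finset.univ : Finset (Fin k)).Nonempty := by
      exact ⟨⟨0, hk⟩, Finset.mem_univ _⟩
    obtain ⟨i, -, hi⟩ := Finset.exists_mem_eq_sup Finset.univ hne z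
    have hi' : z i = linf z := hi.symm
    refine ⟨i, ⟨fun j => if j = i then 0 else z j, by simp, ?_⟩,
      ⟨fun j => linf z - z j, by simp [hi'], ?_⟩⟩
    · have : ∀ j, ((if j = i then 0 else z j : ℕ) : ℤ) * (a j : ℤ) =
          (z j : ℤ) * (a j : ℤ) - (if j = i then (z j : ℤ) * (a j : ℤ) else 0) := by
        intro j; split_ifs <;> simp
      simp only [this, Finset.sum_sub_distrib, Finset.sum_ite_eq', Finset.mem_univ, if_true]
      rw [hzx, hi']
    · simp only [Nat.cast_sub (hle _), sub_mul, Finset.sum_sub_distrib, ← Finset.mul_sum]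
      rw [hzx, ← hA]
  · rintro ⟨i, h1, h2⟩
    have h0 := Sg_nonneg _ _ _ h2
    have hA1 : 1 ≤ A := by have := hlt i; omega
    have hmM : 2 * (F + A) ≤ m := by
      by_contra hc
      push Not at hc
      nlinarith
    have hai : (1 : ℤ) ≤ a i := by exact_mod_cast ha i
    obtain ⟨t, ht0, htm, hty⟩ := box_full a ha F hF0 hF i (A - a i) (by rw [hA])
      (by have := hlt i; omega) (hAg i) m (by linarith) (x - m * a i) h1
      (by have e : (m : ℤ) * (A - a i) - (x - m * a i) = m * A - x := by ring
          rw [e]; exact h2)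
    refine ⟨fun j => (if j = i then m else 0) + t j, ?_, ?_⟩
    · show ∑ j, ((if j = i then m else 0) + t j) * a j = x
      have : ∑ j, (((if j = i then m else 0) + t j : ℕ) : ℤ) * (a j : ℤ) = x := by
        push_cast
        simp only [add_mul, Finset.sum_add_distrib, hty, ite_mul, zero_mul, Finset.sum_ite_eq',
          Finset.mem_univ, if_true]
        ring
      exact_mod_cast this
    · apply le_antisymm
      · refine Finset.sup_le fun j _ => ?_
        show (if j = i then m else 0) + t j ≤ m
        split_ifs with h
        · subst h; omega
        · have := htm j; omega
      · have := Finset.le_sup (f := fun j => (if j = i then m else 0) + t j) (Finset.mem_univ i)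
        simpa [ht0, linf] using this

lemma Delta_char {k : ℕ} (a : Fin k → ℕ) (x : ℕ) (L : ℤ → Prop) (hL0 : ∀ m, L m → 0 ≤ m)
    (h : ∀ m : ℕ, m ∈ LinfSet a x ↔ L m) (d : ℕ) : d ∈ DeltaInf a x ↔ DZ L d := by
  constructor
  · rintro ⟨u, hu, v, hv, huv, rfl, hn⟩
    refine ⟨u, (h u).1 hu, ?_, by omega, ?_⟩
    · have := (h v).1 hv
      have e : (u : ℤ) + (v - u : ℕ) = v := by omega
      rwa [e]
    · intro t h1 h2 hL
      have h0 := hL0 t hL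
      lift t to ℕ using h0
      exact hn t ((h t).2 hL) (by omega)
  · rintro ⟨u, hu, hv, hd, hn⟩
    have h0 := hL0 u hu
    lift u to ℕ using h0
    refine ⟨u, (h u).2 hu, u + d, (h _).2 (by push_cast; exact hv), by omega, by omega, ?_⟩
    rintro t ht ⟨h1, h2⟩
    exact hn t (by omega) (by omega) ((h t).1 ht)

/-- `Δ∞(x)` is eventually periodic in `x` with period `p = lcm(a₁, g₁a₂, A)`. -/
theorem stmt_6 (k : ℕ) (hk : 3 ≤ k) (a : Fin k → ℕ)
    (hmono : StrictMono a)
    (hgcd : Finset.univ.gcd a = 1)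
    (hmin : MinimalGens a)
    (A : ℕ) (hA : A = ∑ i, a i)
    (g1 : ℕ) (hg1 : g1 = (Finset.univ.erase (⟨0, by omega⟩ : Fin k)).gcd a)
    (p : ℕ) (hp : p = Nat.lcm (a ⟨0, by omega⟩) (Nat.lcm (g1 * a ⟨1, by omega⟩) A)) :
    ∃ N : ℕ, ∀ x : ℕ, N ≤ x → (Zfac a x).Nonempty →
      DeltaInf a (x + p) = DeltaInf a x := by
  have hpos : ∀ i, 1 ≤ a i := by
    intro i
    by_contra hc
    have h0 : a i = 0 := by omega
    exact hmin i ⟨0, rfl, by simp [h0]⟩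
  have hposZ : ∀ i, (1 : ℤ) ≤ a i := fun i => by exact_mod_cast hpos i
  have hAZ : (A : ℤ) = ∑ j, (a j : ℤ) := by rw [hA]; push_cast; rfl
  obtain ⟨F, hF0, hF⟩ := Sg_conductor a
  have hother : ∀ i : Fin k, ∃ j, j ≠ i := by
    intro i
    by_cases h : i = ⟨0, by omega⟩
    · exact ⟨⟨1, by omega⟩, by subst h; simp⟩
    · exact ⟨⟨0, by omega⟩, fun h' => h h'.symm⟩
  have hsum : ∀ i, (A : ℤ) - a i = ∑ j ∈ Finset.univ.erase i, (a j : ℤ) := by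
    intro i
    rw [hAZ, ← Finset.add_sum_erase _ _ (Finset.mem_univ i)]; ring
  have hlt : ∀ i, (a i : ℤ) + 1 ≤ A := by
    intro i
    obtain ⟨j, hj⟩ := hother i
    have h1 : (a j : ℤ) ≤ ∑ j ∈ Finset.univ.erase i, (a j : ℤ) :=
      Finset.single_le_sum (f := fun j => (a j : ℤ)) (fun _ _ => by positivity)
        (Finset.mem_erase.2 ⟨hj, Finset.mem_univ _⟩)
    have := hsum i
    have := hposZ j
    linarith
  have hAg : ∀ i, (gg a i : ℤ) ∣ A - a i := by
    intro i
    rw [hsum i]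
    exact Finset.dvd_sum fun j hj =>
      Int.natCast_dvd_natCast.2 (gg_dvd a i j (Finset.mem_erase.1 hj).1)
  have hg : ∀ i, (1 : ℤ) ≤ gg a i := by
    intro i
    obtain ⟨j, hj⟩ := hother i
    have := Nat.pos_of_dvd_of_pos (gg_dvd a i j hj) (hpos j)
    exact_mod_cast this
  have hcopN : ∀ i, Nat.Coprime (gg a i) (a i) := by
    intro i
    apply Nat.dvd_one.1
    rw [← hgcd]
    refine Finset.dvd_gcd fun j _ => ?_
    by_cases hj : j = i
    · subst hj; exact Nat.gcd_dvd_right _ _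
    · exact (Nat.gcd_dvd_left _ _).trans (gg_dvd a i j hj)
  have hcop' : ∀ i, IsCoprime (gg a i : ℤ) (a i : ℤ) := fun i =>
    Nat.isCoprime_iff_coprime.2 (hcopN i)
  have hcop : IsCoprime (gg a ⟨0, by omega⟩ : ℤ) (gg a ⟨1, by omega⟩ : ℤ) := by
    apply Nat.isCoprime_iff_coprime.2
    exact Nat.Coprime.coprime_dvd_right (gg_dvd a ⟨1, by omega⟩ ⟨0, by omega⟩ (by simp)) (hcopN _)
  have hg1' : g1 = gg a ⟨0, by omega⟩ := hg1
  obtain ⟨N, hN⟩ := core (Sg a) (fun i => (a i : ℤ)) (fun i => (gg a i : ℤ)) A F p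
    ⟨0, by omega⟩ ⟨1, by omega⟩ ⟨2, by omega⟩ hposZ
    (by have : a ⟨0, by omega⟩ < a ⟨1, by omega⟩ := hmono (by simp)
        exact_mod_cast this)
    (by have : a ⟨1, by omega⟩ < a ⟨2, by omega⟩ := hmono (by simp)
        exact_mod_cast this)
    (by intro i
        by_cases h0 : i = ⟨0, by omega⟩
        · exact Or.inl h0
        by_cases h1 : i = ⟨1, by omega⟩
        · exact Or.inr (Or.inl h1)
        refine Or.inr (Or.inr ?_)
        have : a ⟨2, by omega⟩ ≤ a i := by
          apply hmono.monotone
          rw [Fin.le_def]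
          rw [Fin.ext_iff] at h0 h1
          simp only at h0 h1 ⊢
          omega
        exact_mod_cast this)
    hlt hAg hg hcop hcop' (Sg_nonneg a) (Sg_dvd a) hF0 hF (by positivity)
    (by apply Int.natCast_dvd_natCast.2
        rw [hp]
        exact (Nat.dvd_lcm_right _ _).trans (Nat.dvd_lcm_right _ _))
    (by apply Int.natCast_dvd_natCast.2
        rw [hp]
        exact Nat.dvd_lcm_left _ _)
    (by rw [← Nat.cast_mul]
        apply Int.natCast_dvd_natCast.2
        rw [hp, ← hg1']
        exact (Nat.dvd_lcm_left _ _).trans (Nat.dvd_lcm_right _ _))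
  have hA1 : (1 : ℤ) ≤ A := by
    have := hlt ⟨0, by omega⟩
    have := hposZ ⟨0, by omega⟩
    linarith
  refine ⟨N.toNat + (A * (2 * (F + A))).toNat + 1, fun x hx _ => ?_⟩
  have key : ∀ y : ℕ, x ≤ y → ∀ d : ℕ,
      (d ∈ DeltaInf a y ↔ DZ (LZ (Sg a) (fun i => (a i : ℤ)) A y) d) := by
    intro y hy d
    apply Delta_char
    · rintro m ⟨i, -, h⟩
      have := Sg_nonneg _ _ _ h
      by_contra hc
      push Not at hc
      have : (0 : ℤ) ≤ y := by positivity
      nlinarith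
    · intro m
      exact Linf_char a hpos F hF0 hF A hAZ hlt hAg y m (by omega) (by omega)
  ext d
  rw [key (x + p) (by omega), key x le_rfl]
  constructor
  · refine hN _ _ (by omega) (by omega) ?_ ?_ _
    · push_cast; exact ⟨-1, by ring⟩
    · push_cast; rw [abs_le]; constructor <;> linarith [Int.natCast_nonneg p]
  · refine hN _ _ (by omega) (by omega) ?_ ?_ _
    · push_cast; exact ⟨1, by ring⟩
    · push_cast; rw [abs_le]; constructor <;> linarith [Int.natCast_nonneg p]
end

section
/- Let p_1 > p_2 > ⋯ > p_k ≥ 2 be pairwise coprime integers with k ≥ 2, let T = p_1 p_2 ⋯ p_k, and let S = ⟨a_1, …, a_k⟩ where a_i = T/p_i for each i (a supersymmetric numerical semigroup). Then Δ_∞(S) = {1, 2, …, p_1}. -/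
open Finset

theorem ssym_cong {k : ℕ} (p a : Fin k → ℕ) (hdvd : ∀ i j, i ≠ j → p i ∣ a j)
    (hca : ∀ i, Nat.Coprime (p i) (a i)) (z w : Fin k → ℕ)
    (h : ∑ j, z j * a j = ∑ j, w j * a j) (i : Fin k) : z i ≡ w i [MOD p i] := by
  have key : ∀ y : Fin k → ℕ, ∑ j, y j * a j ≡ y i * a i [MOD p i] := by
    intro y
    rw [← Finset.add_sum_erase _ _ (Finset.mem_univ i)]
    have hd : p i ∣ ∑ j ∈ Finset.univ.erase i, y j * a j := by
      apply Finset.dvd_sum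
      intro j hj
      exact Dvd.dvd.mul_left (hdvd i j (Finset.ne_of_mem_erase hj).symm) _
    have := (Nat.modEq_zero_iff_dvd.2 hd).add_left (y i * a i)
    simpa using this
  have h3 : z i * a i ≡ w i * a i [MOD p i] := by
    have h1 := key z
    rw [h] at h1
    exact h1.symm.trans (key w)
  exact Nat.ModEq.cancel_right_of_coprime (hca i) h3

theorem ssym_move {k : ℕ} (p a z w : Fin k → ℕ) (i j : Fin k)
    (hT : p i * a i = p j * a j)
    (hw : ∀ l, w l + (if l = i then p i else 0) = z l + (if l = j then p j else 0)) :
    ∑ l, w l * a l = ∑ l, z l * a l := by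
  have h : ∑ l, (w l + (if l = i then p i else 0)) * a l
      = ∑ l, (z l + (if l = j then p j else 0)) * a l := by
    exact Finset.sum_congr rfl (fun l _ => by rw [hw l])
  simp only [add_mul, Finset.sum_add_distrib, ite_mul, zero_mul, Finset.sum_ite_eq',
    Finset.mem_univ, if_true] at h
  omega

theorem le_linf {k : ℕ} (z : Fin k → ℕ) (i : Fin k) : z i ≤ linf z :=
  Finset.le_sup (f := z) (Finset.mem_univ i)

theorem ssym_upper {k : ℕ} (p a : Fin k → ℕ) (hpos : ∀ i, 0 < a i) (hp : ∀ i, 0 < p i)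
    (hdvd : ∀ i j, i ≠ j → p i ∣ a j)
    (hca : ∀ i, Nat.Coprime (p i) (a i)) (hT : ∀ i j, p i * a i = p j * a j)
    (P : ℕ) (hP : ∀ i, p i ≤ P) (i1 : Fin k) (x : ℕ)
    (y : Fin k → ℕ) (hy : ∑ j, y j * a j = x) :
    ∀ n, ∀ z : Fin k → ℕ, ∑ j, z j * a j = x → linf y < linf z → ∑ l, (z l - y l) = n →
      ∃ t ∈ LinfSet a x, linf y < t ∧ t ≤ linf y + P := by
  intro n
  induction n using Nat.strong_induction_on with
  | _ n ih =>
    intro z hz hlt hn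
    obtain ⟨i, -, hi⟩ := Finset.exists_mem_eq_sup Finset.univ ⟨i1, Finset.mem_univ _⟩ z
    have hzi : linf z = z i := hi
    have hyi := le_linf y i
    have hj : ∃ j, z j < y j := by
      by_contra! hcon
      have : ∑ j, y j * a j < ∑ j, z j * a j := by
        apply Finset.sum_lt_sum
        · intro l _
          exact Nat.mul_le_mul_right _ (hcon l)
        · exact ⟨i, Finset.mem_univ _, Nat.mul_lt_mul_of_pos_right (by omega) (hpos i)⟩
      omega
    obtain ⟨j, hj⟩ := hj
    have hij : i ≠ j := by rintro rfl; omega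
    have step : ∀ b c m : ℕ, b < c → b ≡ c [MOD m] → b + m ≤ c := by
      intro b c m hbc hm
      have hd := (Nat.modEq_iff_dvd' hbc.le).1 hm
      have := Nat.le_of_dvd (by omega) hd
      omega
    have h1 : y i + p i ≤ z i := step _ _ _ (by omega)
      (ssym_cong p a hdvd hca y z (by rw [hy, hz]) i)
    have h2 : z j + p j ≤ y j := step _ _ _ hj
      (ssym_cong p a hdvd hca z y (by rw [hy, hz]) j)
    let w : Fin k → ℕ := fun l => z l + (if l = j then p j else 0) - (if l = i then p i else 0)
    have hwi : w i = z i - p i := by simp [w, hij]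
    have hw : ∑ l, w l * a l = x := by
      rw [← hz]
      apply ssym_move p a z w i j (hT i j)
      intro l
      by_cases hl : l = i
      · subst hl; simp [w, hij]; omega
      · simp [w, hl]
    by_cases hwu : linf y < linf w
    · refine ih (∑ l, (w l - y l)) ?_ w hw hwu rfl
      rw [← hn]
      apply Finset.sum_lt_sum
      · intro l _
        by_cases hl : l = j
        · subst hl; simp only [w, if_true]; omega
        · simp only [w, hl, if_false]; omega
      · refine ⟨i, Finset.mem_univ _, ?_⟩
        have := hp i
        omega
    · refine ⟨linf z, ⟨z, hz, rfl⟩, hlt, ?_⟩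
      have := le_linf w i
      have := hP i
      omega

theorem ssym_lower {k : ℕ} (p a : Fin k → ℕ) (hpos : ∀ i, 0 < a i)
    (hdvd : ∀ i j, i ≠ j → p i ∣ a j)
    (hca : ∀ i, Nat.Coprime (p i) (a i)) (hT : ∀ i j, p i * a i = p j * a j)
    (i1 i2 : Fin k) (h12 : i1 ≠ i2) (ha : ∀ l, l ≠ i1 → a i2 ≤ a l)
    (s N : ℕ) (hs : s ≤ p i2) (hN : p i2 ≤ N) (hN1 : N < p i1) :
    p i1 + s - N ∈ DeltaInfS a := by
  let z : Fin k → ℕ := fun l => if l = i1 then s else if l = i2 then N else 0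
  let w : Fin k → ℕ := fun l => if l = i1 then s + p i1 else if l = i2 then N - p i2 else 0
  have hzN : linf z = N := by
    apply le_antisymm
    · apply Finset.sup_le
      intro l _
      simp only [z]
      split_ifs <;> omega
    · have := le_linf z i2
      simpa [z, h12.symm] using this
  have hwN : linf w = s + p i1 := by
    apply le_antisymm
    · apply Finset.sup_le
      intro l _
      simp only [w]
      split_ifs <;> omega
    · have := le_linf w i1
      simpa [w] using this
  have hwz : ∑ l, w l * a l = ∑ l, z l * a l := by
    apply ssym_move p a z w i2 i1 (hT _ _)
    intro l
    simp only [w, z]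
    by_cases h : l = i1
    · subst h; simp [h12]
    · by_cases h' : l = i2
      · subst h'; simp [h]; omega
      · simp [h, h']
  refine Set.mem_iUnion.2 ⟨∑ l, z l * a l, N, ⟨z, rfl, hzN⟩, s + p i1, ⟨w, hwz, hwN⟩,
    by omega, by omega, ?_⟩
  rintro t ⟨y, hy, rfl⟩ ⟨hl1, hl2⟩
  have hy' : ∑ l, y l * a l = ∑ l, z l * a l := hy
  have hm := ssym_cong p a hdvd hca y z hy' i1
  have hz1 : z i1 = s := by simp [z]
  rw [hz1] at hm
  have hy1 := le_linf y i1
  have hys : y i1 = s := by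
    by_contra hne
    rcases Nat.lt_or_gt_of_ne hne with h | h
    · have := Nat.ModEq.eq_of_lt_of_lt hm (by omega) (by omega)
      omega
    · have hd := (Nat.modEq_iff_dvd' h.le).1 hm.symm
      have := Nat.le_of_dvd (by omega) hd
      omega
  have hle : linf y ≤ N := by
    apply Finset.sup_le
    intro l _
    by_cases hl : l = i1
    · subst hl; omega
    · have hzs : ∑ l, z l * a l = s * a i1 + N * a i2 := by
        rw [← Finset.add_sum_erase _ _ (Finset.mem_univ i1), hz1]
        congr 1
        rw [Finset.sum_eq_single i2]
        · simp [z, h12.symm]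
        · intro b hb hb2
          simp [z, Finset.ne_of_mem_erase hb, hb2]
        · intro h
          simp [h12.symm] at h
      have hge : s * a i1 + y l * a l ≤ ∑ l, y l * a l := by
        rw [← Finset.add_sum_erase _ _ (Finset.mem_univ i1), hys]
        apply Nat.add_le_add_left
        exact Finset.single_le_sum (f := fun l => y l * a l) (fun _ _ => Nat.zero_le _)
          (Finset.mem_erase.2 ⟨hl, Finset.mem_univ _⟩)
      have h3 : y l * a i2 ≤ y l * a l := Nat.mul_le_mul_left _ (ha l hl)
      exact Nat.le_of_mul_le_mul_right (by omega : y l * a i2 ≤ N * a i2) (hpos i2)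
  omega

/-- For a supersymmetric numerical semigroup with `a_i = T/p_i`,
`Δ∞(S) = {1, 2, …, p₁}`. -/
theorem stmt_9 (k : ℕ) (hk : 2 ≤ k) (p : Fin k → ℕ)
    (hdec : StrictAnti p) (h2 : ∀ i, 2 ≤ p i)
    (hcop : ∀ i j, i ≠ j → Nat.Coprime (p i) (p j))
    (T : ℕ) (hT : T = ∏ i, p i)
    (i1 : Fin k) (hi1 : (i1 : ℕ) = 0) :
    DeltaInfS (fun i => T / p i) = Set.Icc 1 (p i1) := by
  have hdT : ∀ i, p i ∣ T := fun i => hT ▸ Finset.dvd_prod_of_mem p (Finset.mem_univ i)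
  have hpp : ∀ i, 0 < p i := fun i => by have := h2 i; omega
  have hT0 : 0 < T := hT ▸ Finset.prod_pos (fun i _ => hpp i)
  have hmul : ∀ i, p i * (T / p i) = T := fun i => Nat.mul_div_cancel' (hdT i)
  have hpos : ∀ i, 0 < T / p i := fun i => Nat.div_pos (Nat.le_of_dvd hT0 (hdT i)) (hpp i)
  have ha : ∀ i, T / p i = ∏ j ∈ Finset.univ.erase i, p j := by
    intro i
    apply Nat.div_eq_of_eq_mul_right (hpp i)
    rw [hT, Finset.mul_prod_erase _ _ (Finset.mem_univ i)]
  have hdvd : ∀ i j, i ≠ j → p i ∣ T / p j := by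
    intro i j hij
    rw [ha]
    exact Finset.dvd_prod_of_mem p (Finset.mem_erase.2 ⟨hij, Finset.mem_univ _⟩)
  have hca : ∀ i, Nat.Coprime (p i) (T / p i) := by
    intro i
    rw [ha]
    exact Nat.Coprime.prod_right (fun j hj => hcop i j (Finset.ne_of_mem_erase hj).symm)
  have hTT : ∀ i j, p i * (T / p i) = p j * (T / p j) := fun i j => by rw [hmul, hmul]
  have hP : ∀ i, p i ≤ p i1 := fun i => hdec.antitone (Fin.le_def.2 (by omega))
  apply Set.Subset.antisymm
  · intro d hd
    obtain ⟨x, u, ⟨y, hy, rfl⟩, v, ⟨z, hz, rfl⟩, huv, rfl, hno⟩ := Set.mem_iUnion.1 hd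
    obtain ⟨t, ht, h3, h4⟩ := ssym_upper p (fun i => T / p i) hpos hpp hdvd hca hTT (p i1) hP i1 x
      y hy _ z hz huv rfl
    have := hno t ht
    constructor <;> omega
  · rintro d ⟨hd1, hd2⟩
    let i2 : Fin k := ⟨1, by omega⟩
    have h12 : i1 < i2 := Fin.lt_def.2 (by simp [i2, hi1])
    have hlt := hdec h12
    have hmin : ∀ l, l ≠ i1 → T / p i2 ≤ T / p l := by
      intro l hl
      apply Nat.div_le_div_left _ (hpp l)
      apply hdec.antitone
      apply Fin.le_def.2
      have : (l : ℕ) ≠ i1 := fun h => hl (Fin.ext h)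
      simp only [i2]
      omega
    have main := ssym_lower p (fun i => T / p i) hpos hdvd hca hTT i1 i2 h12.ne hmin
    by_cases hc : d ≤ p i1 - p i2
    · have := main 0 (p i1 - d) (by omega) (by omega) (by omega)
      rwa [show p i1 + 0 - (p i1 - d) = d by omega] at this
    · have := main (d - (p i1 - p i2)) (p i2) (by omega) le_rfl hlt
      rwa [show p i1 + (d - (p i1 - p i2)) - p i2 = d by omega] at this
end

section
/- Fix an integer m ≥ 3 and let S = ⟨3, 3m + 1, 3m + 2⟩. Then Δ_∞(S) = {1, 2, …, m+1} ∪ {2m, 2m+1}. In particular, Δ_∞(S) omits the interval [m+2, 2m−1]. -/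
open Finset

/-- Membership in the set of `∞`-lengths, in coordinates. -/
theorem mem_LinfSet_iff (p q r x t : ℕ) :
    t ∈ LinfSet ![p, q, r] x ↔
      ∃ a b c : ℕ, a * p + b * q + c * r = x ∧ max a (max b c) = t := by
  have key : ∀ z : Fin 3 → ℕ, linf z = max (z 0) (max (z 1) (z 2)) := by
    intro z
    simp only [linf]
    apply le_antisymm
    · refine Finset.sup_le ?_
      intro i _
      fin_cases i <;> simp
    · have h0 : ∀ i : Fin 3, z i ≤ Finset.univ.sup z := fun i => Finset.le_sup (Finset.mem_univ i)
      exact max_le (h0 0) (max_le (h0 1) (h0 2))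
  constructor
  · rintro ⟨z, hz, rfl⟩
    refine ⟨z 0, z 1, z 2, ?_, (key z).symm⟩
    have : ∑ j, z j * (![p, q, r] : Fin 3 → ℕ) j = x := hz
    rw [Fin.sum_univ_three] at this
    simpa using this
  · rintro ⟨a, b, c, h, rfl⟩
    refine ⟨![a, b, c], ?_, ?_⟩
    · show ∑ j, (![a, b, c] : Fin 3 → ℕ) j * (![p, q, r] : Fin 3 → ℕ) j = x
      rw [Fin.sum_univ_three]
      simpa using h
    · rw [key]; simp

/-- Walking from any factorization to a terminal one with small steps never crosses a large gap. -/
theorem exists_terminal (m x u v : ℕ) (hm : 3 ≤ m) (huv : u + m + 2 ≤ v)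
    (hgap : ∀ a b c : ℕ, a * 3 + b * (3 * m + 1) + c * (3 * m + 2) = x →
      max a (max b c) ≤ u ∨ v ≤ max a (max b c)) :
    ∀ n a b c : ℕ, b + c = n → a * 3 + b * (3 * m + 1) + c * (3 * m + 2) = x →
      ∃ a' b' c' : ℕ, a' * 3 + b' * (3 * m + 1) + c' * (3 * m + 2) = x ∧ b' ≤ 1 ∧ c' ≤ 1 ∧
        (b' + c' = 0 → b + c = 0) ∧ (max a (max b c) ≤ u ↔ max a' (max b' c') ≤ u) := by
  intro n
  induction n with
  | zero =>
    intro a b c hn hx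
    exact ⟨a, b, c, hx, by omega, by omega, fun h => h, Iff.rfl⟩
  | succ n ih =>
    intro a b c hn hx
    by_cases hb : 2 ≤ b
    · obtain ⟨b, rfl⟩ := Nat.exists_eq_add_of_le hb
      have hx' : (a + m) * 3 + b * (3 * m + 1) + (c + 1) * (3 * m + 2) = x := by
        rw [← hx]; ring
      obtain ⟨a', b', c', h1, h2, h3, h4, h5⟩ := ih (a + m) b (c + 1) (by omega) hx'
      refine ⟨a', b', c', h1, h2, h3, fun h => by have := h4 h; omega, ?_⟩
      rw [← h5]
      have g1 := hgap _ _ _ hx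
      have g2 := hgap _ _ _ hx'
      omega
    by_cases hc : 2 ≤ c
    · obtain ⟨c, rfl⟩ := Nat.exists_eq_add_of_le hc
      have hx' : (a + m + 1) * 3 + (b + 1) * (3 * m + 1) + c * (3 * m + 2) = x := by
        rw [← hx]; ring
      obtain ⟨a', b', c', h1, h2, h3, h4, h5⟩ := ih (a + m + 1) (b + 1) c (by omega) hx'
      refine ⟨a', b', c', h1, h2, h3, fun h => by have := h4 h; omega, ?_⟩
      rw [← h5]
      have g1 := hgap _ _ _ hx
      have g2 := hgap _ _ _ hx'
      omega
    exact ⟨a, b, c, hx, by omega, by omega, fun h => h, Iff.rfl⟩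

/-- The gap below the factorization `(A, 0, 0)`. -/
theorem top_gap (m A u : ℕ) (hm : 3 ≤ m) (a b c : ℕ)
    (hx : a * 3 + b * (3 * m + 1) + c * (3 * m + 2) = A * 3)
    (hu : max a (max b c) = u) (hA : 2 * m + 1 ≤ A) (hbc : b + c ≠ 0) : u + 2 * m ≤ A := by
  have hmod : (b + 2 * c) % 3 = 0 := by
    have : a * 3 + 3 * (m * (b + c)) + (b + 2 * c) = A * 3 := by rw [← hx]; ring
    omega
  by_cases h2 : b + c ≤ 2
  · have hb : b = 1 := by omega
    have hc : c = 1 := by omega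
    subst hb hc
    omega
  · have e : a * 3 + 3 * (m * (b + c)) + (b + 2 * c) = A * 3 := by rw [← hx]; ring
    have h3 : m * 3 ≤ m * (b + c) := Nat.mul_le_mul_left m (by omega)
    have hmax : u = a ∨ u ≤ b + c := by omega
    rcases hmax with h | h
    · omega
    · obtain ⟨k, hk⟩ := Nat.exists_eq_add_of_le (show 3 ≤ b + c by omega)
      rw [hk] at e
      have : 3 * k ≤ m * k := Nat.mul_le_mul_right k hm
      have e2 : m * (3 + k) = 3 * m + m * k := by ring
      omega

theorem gap_upper (m x u v : ℕ) (hm : 3 ≤ m) (huv : u < v)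
    (hu : ∃ a b c : ℕ, a * 3 + b * (3 * m + 1) + c * (3 * m + 2) = x ∧ max a (max b c) = u)
    (hv : ∃ a b c : ℕ, a * 3 + b * (3 * m + 1) + c * (3 * m + 2) = x ∧ max a (max b c) = v)
    (hgap : ∀ a b c : ℕ, a * 3 + b * (3 * m + 1) + c * (3 * m + 2) = x →
      max a (max b c) ≤ u ∨ v ≤ max a (max b c)) :
    v - u ≤ m + 1 ∨ v - u = 2 * m ∨ v - u = 2 * m + 1 := by
  by_cases hd : v - u ≤ m + 1
  · exact Or.inl hd
  right
  obtain ⟨a, b, c, hx, hmx⟩ := hu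
  obtain ⟨p, q, r, hy, hmy⟩ := hv
  obtain ⟨a', b', c', h1, h2, h3, h4, h5⟩ :=
    exists_terminal m x u v hm (by omega) hgap _ a b c rfl hx
  obtain ⟨p', q', r', k1, k2, k3, k4, k5⟩ :=
    exists_terminal m x u v hm (by omega) hgap _ p q r rfl hy
  have hL : max a' (max b' c') ≤ u := h5.1 hmx.le
  have hR : ¬ max p' (max q' r') ≤ u := fun h => by have := k5.2 h; omega
  -- the zero-terminal is only reached from itself
  have hcase : (b' = 0 ∧ c' = 0 ∧ q' = 1 ∧ r' = 1) ∨ (b' = 1 ∧ c' = 1 ∧ q' = 0 ∧ r' = 0) := by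
    interval_cases b' <;> interval_cases c' <;> interval_cases q' <;> interval_cases r' <;> omega
  rcases hcase with ⟨rfl, rfl, rfl, rfl⟩ | ⟨rfl, rfl, rfl, rfl⟩
  · exfalso
    omega
  · have hz := k4 rfl
    have hq : q = 0 := by omega
    have hr : r = 0 := by omega
    subst hq hr
    have hp : p = v := by omega
    subst hp
    have hbc : b + c ≠ 0 := by
      intro h
      have hb : b = 0 := by omega
      have hc : c = 0 := by omega
      subst hb hc
      omega
    have := top_gap m p u hm a b c (by omega) hmx (by omega) hbc
    omega

/-- Realization of the gaps `1, …, m`. -/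
theorem gap_realize (m k : ℕ) (hm : 3 ≤ m) (hk1 : 1 ≤ k) (hk : k ≤ m) :
    ∃ x u v : ℕ, u < v ∧ v - u = m + 1 - k ∧
      (∃ a b c : ℕ, a * 3 + b * (3 * m + 1) + c * (3 * m + 2) = x ∧ max a (max b c) = u) ∧
      (∃ a b c : ℕ, a * 3 + b * (3 * m + 1) + c * (3 * m + 2) = x ∧ max a (max b c) = v) ∧
      (∀ a b c : ℕ, a * 3 + b * (3 * m + 1) + c * (3 * m + 2) = x →
        max a (max b c) ≤ u ∨ v ≤ max a (max b c)) := by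
  obtain ⟨j, hj⟩ := Nat.exists_eq_add_of_le hk
  have hmm : 3 * m ≤ m * m := Nat.mul_le_mul_right m hm
  have hkm : m * k ≤ m * m := Nat.mul_le_mul_left m hk
  refine ⟨(3 * (m * m) + 3 * (m * k) + m + k + 1) * 3, 3 * (m * m), 3 * (m * m) + j + 1,
    by omega, by omega, ⟨3 * (m * m), 3 * k - 1, 2, ?_, ?_⟩,
    ⟨3 * (m * m) + j + 1, 0, 3 * k, ?_, ?_⟩, ?_⟩
  · obtain ⟨i, rfl⟩ := Nat.exists_eq_add_of_le hk1
    have : 3 * (1 + i) - 1 = 3 * i + 2 := by omega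
    rw [this]; ring
  · omega
  · subst hj; ring
  · omega
  · intro a b c hx
    have e : a + (m * (b + c)) + (b + 2 * c) / 3 =
        3 * (m * m) + 3 * (m * k) + m + k + 1 ∧ (b + 2 * c) % 3 = 0 := by
      have : a * 3 + 3 * (m * (b + c)) + (b + 2 * c) =
        (3 * (m * m) + 3 * (m * k) + m + k + 1) * 3 := by rw [← hx]; ring
      omega
    obtain ⟨e1, e2⟩ := e
    by_cases hn : b + c ≤ 3 * k
    · have : m * (b + c) ≤ m * (3 * k) := Nat.mul_le_mul_left m hn
      have e3 : m * (3 * k) = 3 * (m * k) := by ring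
      right
      omega
    · left
      have h1 : m * (3 * k + 1) ≤ m * (b + c) := Nat.mul_le_mul_left m (by omega)
      have e3 : m * (3 * k + 1) = 3 * (m * k) + m := by ring
      have ha : a ≤ 3 * (m * m) := by omega
      have hb : b + c ≤ 3 * (m * m) := by
        have : 3 * (b + c) ≤ m * (b + c) := Nat.mul_le_mul_right _ hm
        omega
      omega

/-- All relevant factorizations of a small element have `b + c ≤ 2`. -/
theorem small_bc_sum (m x a b c : ℕ) (hm : 3 ≤ m) (hx : x ≤ 6 * m + 10)
    (h : a * 3 + b * (3 * m + 1) + c * (3 * m + 2) = x) : b + c ≤ 2 := by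
  by_contra hcon
  have h1 : 3 * (3 * m + 1) ≤ (b + c) * (3 * m + 1) := Nat.mul_le_mul_right _ (by omega)
  have h2 : (b + c) * (3 * m + 1) + c + a * 3 = x := by rw [← h]; ring
  omega

/-- For `S = ⟨3, 3m+1, 3m+2⟩` with `m ≥ 3`,
`Δ∞(S) = {1, …, m+1} ∪ {2m, 2m+1}`; in particular it omits `[m+2, 2m−1]`. -/
theorem stmt_11 (m : ℕ) (hm : 3 ≤ m) :
    DeltaInfS ![3, 3 * m + 1, 3 * m + 2] =
      Set.Icc 1 (m + 1) ∪ {2 * m, 2 * m + 1} := by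
  ext d
  simp only [DeltaInfS, DeltaInf, deltaSet, Set.mem_iUnion, Set.mem_ofPred_eq, mem_LinfSet_iff,
    Set.mem_union, Set.mem_Icc, Set.mem_insert_iff, Set.mem_singleton_iff]
  constructor
  · rintro ⟨x, u, hu, v, hv, huv, rfl, hgap⟩
    have := gap_upper m x u v hm huv hu hv (fun a b c h => by
      have := hgap _ ⟨a, b, c, h, rfl⟩
      omega)
    omega
  · intro hd
    have fin : ∀ x u v : ℕ, u < v → v - u = d →
        (∃ a b c : ℕ, a * 3 + b * (3 * m + 1) + c * (3 * m + 2) = x ∧ max a (max b c) = u) →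
        (∃ a b c : ℕ, a * 3 + b * (3 * m + 1) + c * (3 * m + 2) = x ∧ max a (max b c) = v) →
        (∀ a b c : ℕ, a * 3 + b * (3 * m + 1) + c * (3 * m + 2) = x →
          max a (max b c) ≤ u ∨ v ≤ max a (max b c)) →
        ∃ x, ∃ u, (∃ a b c : ℕ, a * 3 + b * (3 * m + 1) + c * (3 * m + 2) = x ∧
          max a (max b c) = u) ∧ ∃ v, (∃ a b c : ℕ, a * 3 + b * (3 * m + 1) + c * (3 * m + 2) = x ∧
          max a (max b c) = v) ∧ u < v ∧ v - u = d ∧ ∀ t, (∃ a b c : ℕ,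
          a * 3 + b * (3 * m + 1) + c * (3 * m + 2) = x ∧ max a (max b c) = t) →
          ¬ (u < t ∧ t < v) := by
      intro x u v h1 h2 h3 h4 h5
      refine ⟨x, u, h3, v, h4, h1, h2, ?_⟩
      rintro t ⟨a, b, c, h, rfl⟩
      have := h5 a b c h
      omega
    have small : ∀ x a b c : ℕ, x ≤ 6 * m + 10 →
        a * 3 + b * (3 * m + 1) + c * (3 * m + 2) = x →
        (b = 0 ∧ c = 0) ∨ (b = 1 ∧ c = 0) ∨ (b = 0 ∧ c = 1) ∨ (b = 2 ∧ c = 0) ∨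
        (b = 1 ∧ c = 1) ∨ (b = 0 ∧ c = 2) := by
      intro x a b c hx h
      have := small_bc_sum m x a b c hm hx h
      omega
    by_cases h1 : 1 ≤ d ∧ d ≤ m
    · obtain ⟨x, u, v, g1, g2, g3, g4, g5⟩ :=
        gap_realize m (m + 1 - d) hm (by omega) (by omega)
      exact fin x u v g1 (by omega) g3 g4 g5
    · have h2 : d = m + 1 ∨ d = 2 * m ∨ d = 2 * m + 1 := by omega
      rcases h2 with h2 | h2 | h2
      · refine fin (6 * m + 10) 2 (m + 3) (by omega) (by omega) ⟨2, 0, 2, by omega, by omega⟩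
          ⟨m + 3, 1, 0, by omega, by omega⟩ ?_
        intro a b c h
        rcases small _ a b c (by omega) h with ⟨rfl, rfl⟩ | ⟨rfl, rfl⟩ | ⟨rfl, rfl⟩ |
          ⟨rfl, rfl⟩ | ⟨rfl, rfl⟩ | ⟨rfl, rfl⟩ <;> omega
      · refine fin (6 * m + 3) 1 (2 * m + 1) (by omega) (by omega) ⟨0, 1, 1, by omega, by omega⟩
          ⟨2 * m + 1, 0, 0, by omega, by omega⟩ ?_
        intro a b c h
        rcases small _ a b c (by omega) h with ⟨rfl, rfl⟩ | ⟨rfl, rfl⟩ | ⟨rfl, rfl⟩ |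
          ⟨rfl, rfl⟩ | ⟨rfl, rfl⟩ | ⟨rfl, rfl⟩ <;> omega
      · refine fin (6 * m + 6) 1 (2 * m + 2) (by omega) (by omega) ⟨1, 1, 1, by omega, by omega⟩
          ⟨2 * m + 2, 0, 0, by omega, by omega⟩ ?_
        intro a b c h
        rcases small _ a b c (by omega) h with ⟨rfl, rfl⟩ | ⟨rfl, rfl⟩ | ⟨rfl, rfl⟩ |
          ⟨rfl, rfl⟩ | ⟨rfl, rfl⟩ | ⟨rfl, rfl⟩ <;> omega
end

section
/- Let p_1 > p_2 > ⋯ > p_k ≥ 2 be pairwise coprime integers with k ≥ 2, let T = p_1 p_2 ⋯ p_k, and let S = ⟨a_1, …, a_k⟩ where a_i = T/p_i for each i (a supersymmetric numerical semigroup). Then Δ_0(S) = {1}. -/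
open Finset

theorem move_aux {k : ℕ} (p a : Fin k → ℕ) (T : ℕ) (hp : ∀ i, p i ≠ 0)
    (haT : ∀ i, a i * p i = T) (hdvd : ∀ i j, i ≠ j → p i ∣ a j)
    (hc : ∀ i, Nat.Coprime (p i) (a i)) (x : ℕ) (z w : Fin k → ℕ)
    (hz : z ∈ Zfac a x) (hw : w ∈ Zfac a x) (ha : ∀ i, a i ≠ 0)
    (hlt : lzero w < lzero z) :
    ∃ z' ∈ Zfac a x, lzero z' + 1 = lzero z := by
  simp only [Zfac, Set.mem_setOf_eq] at hz hw
  obtain ⟨i, hi1, hi2⟩ := Finset.exists_mem_notMem_of_card_lt_card hlt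
  simp only [Finset.mem_filter, Finset.mem_univ, true_and, not_not] at hi1 hi2
  have hxd : p i ∣ x := by
    rw [← hw]
    refine Finset.dvd_sum fun j _ => ?_
    by_cases hij : i = j
    · subst hij; simp [hi2]
    · exact (hdvd i j hij).mul_left _
  have hzi : p i ∣ z i := by
    rw [← hz, ← Finset.add_sum_erase _ _ (Finset.mem_univ i)] at hxd
    have h2 : p i ∣ ∑ j ∈ Finset.univ.erase i, z j * a j := by
      refine Finset.dvd_sum fun j hj => ?_
      exact (hdvd i j (Finset.ne_of_mem_erase hj).symm).mul_left _
    exact (hc i).dvd_of_dvd_mul_right ((Nat.dvd_add_left h2).1 hxd)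
  obtain ⟨q, hq⟩ := hzi
  have hx : x ≠ 0 := by
    intro h0
    rw [← hz, Finset.sum_eq_zero_iff] at h0
    have := h0 i (Finset.mem_univ i)
    exact (mul_ne_zero hi1 (ha i)) this
  have hwpos : 0 < lzero w := by
    obtain ⟨j, -, hj⟩ := Finset.exists_ne_zero_of_sum_ne_zero (by rw [hw]; exact hx)
    exact Finset.card_pos.2 ⟨j, by simpa using left_ne_zero_of_mul hj⟩
  have h1 : 1 < (Finset.univ.filter fun i => z i ≠ 0).card := lt_of_le_of_lt hwpos hlt
  obtain ⟨j, hj, hji⟩ := Finset.exists_mem_ne h1 i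
  simp only [Finset.mem_filter, Finset.mem_univ, true_and] at hj
  refine ⟨fun l => if l = i then 0 else if l = j then z j + p j * q else z l, ?_, ?_⟩
  · simp only [Zfac, Set.mem_setOf_eq]
    have key : ∑ l, ((if l = i then 0 else if l = j then z j + p j * q else z l) * a l
        + if l = i then q * T else 0) = ∑ l, (z l * a l + if l = j then q * T else 0) := by
      refine Finset.sum_congr rfl fun l _ => ?_
      by_cases h : l = i
      · subst h
        simp only [if_true, if_neg hji.symm]
        rw [hq, ← haT l]; ring
      · by_cases h' : l = j
        · subst h'
          simp only [if_true, if_neg h]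
          rw [← haT l]; ring
        · simp [h, h']
    rw [Finset.sum_add_distrib, Finset.sum_add_distrib] at key
    simp only [Finset.sum_ite_eq', Finset.mem_univ, if_true] at key
    omega
  · unfold lzero
    have : (Finset.univ.filter fun l =>
        (if l = i then 0 else if l = j then z j + p j * q else z l) ≠ 0)
        = (Finset.univ.filter fun l => z l ≠ 0).erase i := by
      ext l
      by_cases h : l = i
      · simp [h]
      · by_cases h' : l = j
        · subst h'; simp [h, hj]
        · simp [h, h']
    rw [this]
    exact Finset.card_erase_add_one (by simpa using hi1)

/-- For a supersymmetric numerical semigroup with `a_i = T/p_i`, `Δ₀(S) = {1}`. -/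
theorem stmt_14 (k : ℕ) (hk : 2 ≤ k) (p : Fin k → ℕ)
    (hdec : StrictAnti p) (h2 : ∀ i, 2 ≤ p i)
    (hcop : ∀ i j, i ≠ j → Nat.Coprime (p i) (p j))
    (T : ℕ) (hT : T = ∏ i, p i) :
    DeltaZeroS (fun i => T / p i) = {1} := by
  have hp : ∀ i, p i ≠ 0 := fun i => by have := h2 i; omega
  have hae : ∀ i, T / p i = ∏ j ∈ Finset.univ.erase i, p j := fun i => by
    rw [hT, ← Finset.mul_prod_erase _ _ (Finset.mem_univ i)]
    exact Nat.mul_div_cancel_left _ (Nat.pos_of_ne_zero (hp i))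
  have haT : ∀ i, T / p i * p i = T := fun i => by
    rw [hae, hT, Finset.prod_erase_mul _ _ (Finset.mem_univ i)]
  have hdvd : ∀ i j, i ≠ j → p i ∣ T / p j := fun i j hij => by
    rw [hae]
    exact Finset.dvd_prod_of_mem _ (by simp [hij])
  have hc : ∀ i, Nat.Coprime (p i) (T / p i) := fun i => by
    rw [hae]
    exact Nat.Coprime.prod_right fun j hj => hcop i j (Finset.ne_of_mem_erase hj).symm
  have ha : ∀ i, T / p i ≠ 0 := fun i => by
    rw [hae]
    exact Finset.prod_ne_zero_iff.2 fun j _ => hp j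
  ext d
  simp only [DeltaZeroS, DeltaZero, deltaSet, LzeroSet, Set.mem_iUnion, Set.mem_setOf_eq,
    Set.mem_singleton_iff]
  constructor
  · rintro ⟨x, u, ⟨w, hw, rfl⟩, v, ⟨z, hz, rfl⟩, huv, rfl, hgap⟩
    obtain ⟨z', hz', hl⟩ := move_aux p (fun i => T / p i) T hp haT hdvd hc x z w hz hw ha huv
    have := hgap _ ⟨z', hz', rfl⟩
    omega
  · rintro rfl
    let i : Fin k := ⟨0, by omega⟩
    let j : Fin k := ⟨1, by omega⟩
    have hij : i ≠ j := by simp [i, j]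
    refine ⟨2 * T, 1, ⟨fun l => if l = i then 2 * p i else 0, ?_, ?_⟩, 2,
      ⟨fun l => (if l = i then p i else 0) + if l = j then p j else 0, ?_, ?_⟩, by omega, rfl,
      fun t _ => by omega⟩
    · simp only [Zfac, Set.mem_setOf_eq, ite_mul, zero_mul, Finset.sum_ite_eq', Finset.mem_univ,
        if_true]
      linarith [haT i]
    · have : (Finset.univ.filter fun l => (if l = i then 2 * p i else 0) ≠ 0) = {i} := by
        ext l; simp [hp]
      simp only [lzero]
      rw [this, Finset.card_singleton]
    · simp only [Zfac, Set.mem_setOf_eq, add_mul, Finset.sum_add_distrib, ite_mul, zero_mul,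
        Finset.sum_ite_eq', Finset.mem_univ, if_true]
      linarith [haT i, haT j]
    · have : (Finset.univ.filter fun l =>
          ((if l = i then p i else 0) + if l = j then p j else 0) ≠ 0) = {i, j} := by
        ext l
        by_cases h : l = i <;> by_cases h' : l = j <;> simp [h, h', hp]
      simp only [lzero]
      rw [this, Finset.card_pair hij]
end

section
/- Let S = ⟨m, a_1, …, a_{m−1}⟩ be a numerical semigroup of maximal embedding dimension: m ≥ 3, the generators m, a_1, …, a_{m−1} are minimal generators, and a_i ≡ i (mod m) for each i = 1, …, m−1. Then Δ_0(S) = {1, 2}. -/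
open Finset

theorem aux_val_add {k : ℕ} (a w z : Fin k → ℕ) :
    ∑ j, (w + z) j * a j = ∑ j, w j * a j + ∑ j, z j * a j := by
  simp [add_mul, Finset.sum_add_distrib]

theorem aux_val_single {k : ℕ} (a : Fin k → ℕ) (i : Fin k) (c : ℕ) :
    ∑ j, (Pi.single i c : Fin k → ℕ) j * a j = c * a i := by
  rw [Finset.sum_eq_single i]
  · simp
  · intro j _ hj
    simp [hj]
  · simp

theorem aux_lzero_mono {k : ℕ} (w z : Fin k → ℕ) : lzero w ≤ lzero (w + z) := by
  unfold lzero
  apply Finset.card_le_card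
  intro j hj
  simp only [Finset.mem_filter, Finset.mem_univ, true_and, Pi.add_apply] at hj ⊢
  omega

theorem aux_lzero_single {k : ℕ} (w : Fin k → ℕ) (i : Fin k) (c : ℕ) :
    lzero (w + Pi.single i c) ≤ lzero w + 1 := by
  unfold lzero
  refine le_trans (Finset.card_le_card (t := insert i (Finset.univ.filter fun i => w i ≠ 0)) ?_)
    (Finset.card_insert_le _ _)
  intro j hj
  by_cases h : j = i
  · simp [h]
  · simp [h] at hj ⊢
    exact hj

theorem aux_trade (m : ℕ) (a : Fin m → ℕ)
    (i0 : Fin m) (hi0 : (i0 : ℕ) = 0) (h0 : a i0 = m)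
    (hmod : ∀ i : Fin m, a i % m = (i : ℕ))
    (hmin : MinimalGens a) (i j : Fin m) (hi : i ≠ i0) (hj : j ≠ i0) :
    ∃ (k : Fin m) (c : ℕ), (k : ℕ) = ((i : ℕ) + j) % m ∧ k ≠ i ∧ k ≠ j ∧
      a i + a j = a k + c * m := by
  have hm : 0 < m := i0.pos
  have hi' : (i : ℕ) ≠ 0 := fun h => hi (Fin.ext (by omega))
  have hj' : (j : ℕ) ≠ 0 := fun h => hj (Fin.ext (by omega))
  have hil := i.2
  have hjl := j.2
  have hk : ((i : ℕ) + j) % m < m := Nat.mod_lt _ hm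
  have hkv : ((i : ℕ) + j) % m = i + j ∨ ((i : ℕ) + j) % m = i + j - m := by
    by_cases h : (i : ℕ) + j < m
    · left; exact Nat.mod_eq_of_lt h
    · right
      rw [Nat.mod_eq_sub_mod (by omega), Nat.mod_eq_of_lt (by omega)]
  obtain ⟨k, hkk⟩ : ∃ k : Fin m, (k : ℕ) = ((i : ℕ) + j) % m := ⟨⟨_, hk⟩, rfl⟩
  have hki : k ≠ i := fun h => by
    have := congrArg Fin.val h
    omega
  have hkj : k ≠ j := fun h => by
    have := congrArg Fin.val h
    omega
  have hmodeq : a k ≡ a i + a j [MOD m] := by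
    unfold Nat.ModEq
    rw [hmod k, Nat.add_mod, hmod i, hmod j, hkk]
  have hle : a k ≤ a i + a j := by
    by_contra hlt
    push Not at hlt
    obtain ⟨c, hc⟩ := (Nat.modEq_iff_dvd' hlt.le).1 hmodeq.symm
    have hc' : a k = a i + a j + c * m := by rw [mul_comm]; omega
    by_cases hk0 : k = i0
    · rw [hk0, h0] at hc'
      have hc1 : 1 ≤ c := by
        rcases Nat.eq_zero_or_pos c with h | h
        · subst h; rw [hk0, h0] at hlt hc; omega
        · exact h
      have : m ≤ c * m := Nat.le_mul_of_pos_left m hc1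
      have h1 := hmod i
      have : a i = 0 := by omega
      rw [this] at h1
      simp at h1
      omega
    · apply hmin k
      refine ⟨Pi.single i 1 + Pi.single j 1 + Pi.single i0 c, ?_, ?_⟩
      · simp [hki, hkj, hk0]
      · rw [aux_val_add, aux_val_add, aux_val_single, aux_val_single, aux_val_single, h0]
        omega
  obtain ⟨c, hc⟩ := (Nat.modEq_iff_dvd' hle).1 hmodeq
  exact ⟨k, c, hkk, hki, hkj, by rw [mul_comm]; omega⟩

theorem aux_split {k : ℕ} (z : Fin k → ℕ) (i j : Fin k) (hij : i ≠ j) (hi : z i ≠ 0)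
    (hj : z j ≠ 0) : ∃ w : Fin k → ℕ, z = w + Pi.single i 1 + Pi.single j 1 := by
  refine ⟨fun t => if t = i ∨ t = j then z t - 1 else z t, ?_⟩
  funext t
  by_cases h1 : t = i
  · subst h1
    simp [hij]; omega
  · by_cases h2 : t = j
    · subst h2
      simp [h1]; omega
    · simp [h1, h2]

theorem aux_gap (m : ℕ) (a : Fin m → ℕ)
    (i0 : Fin m) (hi0 : (i0 : ℕ) = 0) (h0 : a i0 = m)
    (hmod : ∀ i : Fin m, a i % m = (i : ℕ))
    (hmin : MinimalGens a) (x v : ℕ) (hv : 3 ≤ v)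
    (hgap : ∀ z ∈ Zfac a x, v ≤ lzero z ∨ lzero z + 3 ≤ v) (n : ℕ) :
    ∀ z ∈ Zfac a x, v ≤ lzero z → ∑ j, z j * (if j = i0 then 0 else 1) ≤ n → False := by
  induction n with
  | zero =>
    intro z _ hl hn
    have : lzero z ≤ 1 := by
      unfold lzero
      rw [Finset.card_le_one]
      have key : ∀ t, z t ≠ 0 → t = i0 := by
        intro t ht
        by_contra hne
        have h := Finset.single_le_sum (f := fun j => z j * (if j = i0 then 0 else 1))
          (fun _ _ => Nat.zero_le _) (Finset.mem_univ t)
        simp [hne] at h hn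
        exact ht (by simpa [hne] using hn t)
      intro s hs t ht
      simp only [Finset.mem_filter, Finset.mem_univ, true_and] at hs ht
      rw [key s hs, key t ht]
    omega
  | succ n ih =>
    intro z hz hl hn
    have hcard : 1 < ((Finset.univ.filter fun i => z i ≠ 0).erase i0).card := by
      have := Finset.pred_card_le_card_erase (s := Finset.univ.filter fun i => z i ≠ 0) (a := i0)
      unfold lzero at hl
      omega
    obtain ⟨i, hi, j, hj, hij⟩ := Finset.one_lt_card.1 hcard
    simp only [Finset.mem_erase, Finset.mem_filter, Finset.mem_univ, true_and] at hi hj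
    obtain ⟨w, rfl⟩ := aux_split z i j hij hi.2 hj.2
    obtain ⟨k, c, -, -, -, hc⟩ := aux_trade m a i0 hi0 h0 hmod hmin i j hi.1 hj.1
    have hz' : w + Pi.single k 1 + Pi.single i0 c ∈ Zfac a x := by
      unfold Zfac at hz ⊢
      simp only [Set.mem_ofPred_eq, aux_val_add, aux_val_single] at hz ⊢
      rw [h0]
      omega
    have h1 := aux_lzero_single (w + Pi.single i 1) j 1
    have h2 := aux_lzero_single w i 1
    have h3 := aux_lzero_mono w (Pi.single k 1)
    have h4 := aux_lzero_mono (w + Pi.single k 1) (Pi.single i0 c)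
    apply ih _ hz'
    · have := hgap _ hz'
      omega
    · rw [aux_val_add, aux_val_add, aux_val_single, aux_val_single] at hn ⊢
      simp only [hi.1, hj.1, if_true, if_false] at hn ⊢
      split_ifs <;> omega

/-- For a maximal embedding dimension numerical semigroup
`S = ⟨m, a_1, …, a_{m−1}⟩` with `m ≥ 3` and `a_i ≡ i (mod m)`, `Δ₀(S) = {1, 2}`. -/
theorem stmt_15 (m : ℕ) (hm : 3 ≤ m) (a : Fin m → ℕ)
    (i0 : Fin m) (hi0 : (i0 : ℕ) = 0) (h0 : a i0 = m)
    (hmod : ∀ i : Fin m, a i % m = (i : ℕ))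
    (hmin : MinimalGens a) :
    DeltaZeroS a = {1, 2} := by
  have hmp : 0 < m := by omega
  let i1 : Fin m := ⟨1, by omega⟩
  have hi1 : i1 ≠ i0 := fun h => by
    have := congrArg Fin.val h
    simp [i1] at this
    omega
  apply Set.Subset.antisymm
  · intro d hd
    unfold DeltaZeroS DeltaZero deltaSet LzeroSet at hd
    simp only [Set.mem_iUnion, Set.mem_ofPred_eq] at hd
    obtain ⟨x, u, -, v, ⟨z, hz, hzv⟩, huv, hd, hgap⟩ := hd
    by_contra hne
    simp only [Set.mem_insert_iff, Set.mem_singleton_iff] at hne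
    refine aux_gap m a i0 hi0 h0 hmod hmin x v (by omega) ?_ _ z hz hzv.ge le_rfl
    intro y hy
    have := hgap _ ⟨y, hy, rfl⟩
    omega
  · intro d hd
    simp only [Set.mem_insert_iff, Set.mem_singleton_iff] at hd
    unfold DeltaZeroS DeltaZero deltaSet LzeroSet
    simp only [Set.mem_iUnion, Set.mem_ofPred_eq]
    rcases hd with rfl | rfl
    · obtain ⟨k, c, hk, hki, -, hc⟩ := aux_trade m a i0 hi0 h0 hmod hmin i1 i1 hi1 hi1
      have hk2 : (k : ℕ) = 2 := by
        rw [hk]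
        exact Nat.mod_eq_of_lt (by simp only [i1]; omega)
      have hk0 : k ≠ i0 := fun h => by
        have := congrArg Fin.val h
        omega
      have hcne : c ≠ 0 := by
        rintro rfl
        apply hmin k
        refine ⟨Pi.single i1 2, by simp [hki], ?_⟩
        rw [aux_val_single]
        omega
      refine ⟨2 * a i1, 1, ⟨Pi.single i1 2, aux_val_single a i1 2, ?_⟩,
        2, ⟨Pi.single k 1 + Pi.single i0 c, ?_, ?_⟩, by norm_num, by norm_num, ?_⟩
      · unfold lzero
        rw [Finset.card_eq_one]
        refine ⟨i1, ?_⟩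
        ext t
        by_cases h : t = i1 <;> simp [h]
      · unfold Zfac
        simp only [Set.mem_ofPred_eq, aux_val_add, aux_val_single]
        rw [h0]
        omega
      · unfold lzero
        rw [Finset.card_eq_two]
        refine ⟨k, i0, hk0, ?_⟩
        ext t
        by_cases h : t = k
        · simp [h]
        · by_cases h' : t = i0
          · subst h'
            simp [hcne]
          · simp [h, h']
      · intro t _
        omega
    · let j1 : Fin m := ⟨m - 1, by omega⟩
      have hj1 : j1 ≠ i0 := fun h => by
        have := congrArg Fin.val h
        simp [j1] at this
        omega
      have hij : i1 ≠ j1 := fun h => by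
        have := congrArg Fin.val h
        simp [i1, j1] at this
        omega
      obtain ⟨k, c, hk, -, -, hc⟩ := aux_trade m a i0 hi0 h0 hmod hmin i1 j1 hi1 hj1
      have hk0 : k = i0 := by
        apply Fin.ext
        rw [hk, hi0]
        have : (i1 : ℕ) + j1 = m := by simp only [i1, j1]; omega
        rw [this, Nat.mod_self]
      subst hk0
      let w : Fin m → ℕ := fun t => if t = i1 ∨ t = j1 then 0 else 1
      have hw : (fun _ => 1 : Fin m → ℕ) = w + Pi.single i1 1 + Pi.single j1 1 := by
        funext t
        by_cases h1 : t = i1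
        · simp [w, h1, hij]
        · by_cases h2 : t = j1
          · simp [w, h2, hij.symm]
          · simp [w, h1, h2]
      refine ⟨∑ j, (fun _ => 1 : Fin m → ℕ) j * a j, m - 2,
        ⟨w + Pi.single k (1 + c), ?_, ?_⟩, m, ⟨fun _ => 1, rfl, ?_⟩, by omega, by omega, ?_⟩
      · rw [hw]
        unfold Zfac
        simp only [Set.mem_ofPred_eq, aux_val_add, aux_val_single]
        rw [h0] at hc ⊢
        rw [add_mul]
        omega
      · unfold lzero
        have : (Finset.univ.filter fun t : Fin m => (w + Pi.single k (1 + c) : Fin m → ℕ) t ≠ 0)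
            = ({i1, j1} : Finset (Fin m))ᶜ := by
          ext t
          by_cases h1 : t = i1
          · simp [w, h1, hi1]
          · by_cases h2 : t = j1
            · simp [w, h2, hj1]
            · simp [w, h1, h2]
        rw [this, Finset.card_compl, Finset.card_pair hij, Fintype.card_fin]
      · simp [lzero]
      · rintro t ⟨z, hz, rfl⟩ hlt
        have hz1 : lzero z = m - 1 := by omega
        have hcard : (Finset.univ.filter fun i => z i ≠ 0)ᶜ.card = 1 := by
          rw [Finset.card_compl, Fintype.card_fin]
          unfold lzero at hz1
          omega
        obtain ⟨s, hs⟩ := Finset.card_eq_one.1 hcard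
        have hs' : ∀ t, z t = 0 ↔ t = s := by
          intro t
          have := Finset.ext_iff.1 hs t
          simpa using this
        apply hmin s
        refine ⟨fun t => z t - 1, by simp [(hs' s).2 rfl], ?_⟩
        have hsum : z + Pi.single s 1 = (fun t => z t - 1) + (fun _ => 1) := by
          funext t
          by_cases h : t = s
          · simp [h, (hs' s).2 rfl]
          · have := mt (hs' t).1 h
            simp [h]
            omega
        have h5 := congrArg (fun y : Fin m → ℕ => ∑ j, y j * a j) hsum
        simp only [aux_val_add, aux_val_single] at h5
        unfold Zfac at hz
        simp only [Set.mem_ofPred_eq] at hz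
        show ∑ j, (z j - 1) * a j = a s
        omega
end
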